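/- arXiv:2311.15178 — 11 statements merged into one kernel-verified Lean document; each statement's English description precedes it below -/
import Mathlib

section
/- For all positive integers F and K with F ≥ 2, s(F, K, F−1) = ⌈K/F⌉. -/
open scoped Classical

/-- A placement delivery array with parameters `(F, K, Z)` over alphabet `S`:
an `F × K` array of cells that are either empty (`none`) or an element of `S`,
such that each column has exactly `Z` empty cells, no element occurs twice in a
row or in a column, and two equal entries in positions `(j₁,k₁)`, `(j₂,k₂)`
force the cells `(j₁,k₂)` and `(j₂,k₁)` to be empty. -/
def IsPDA {S : Type} (F K Z : ℕ) (A : Fin F → Fin K → Option S) : Prop :=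
  (∀ k : Fin K, (Finset.univ.filter fun j : Fin F => A j k = none).card = Z) ∧
  (∀ (j : Fin F) (k₁ k₂ : Fin K) (t : S), A j k₁ = some t → A j k₂ = some t → k₁ = k₂) ∧
  (∀ (j₁ j₂ : Fin F) (k : Fin K) (t : S), A j₁ k = some t → A j₂ k = some t → j₁ = j₂) ∧
  (∀ (j₁ j₂ : Fin F) (k₁ k₂ : Fin K) (t : S), j₁ ≠ j₂ → k₁ ≠ k₂ →
      A j₁ k₁ = some t → A j₂ k₂ = some t → A j₁ k₂ = none ∧ A j₂ k₁ = none)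

/-- `sPDA F K Z` is the minimum size of an alphabet `S` for which an `S`-PDA with
parameters `(F, K, Z)` exists. -/
noncomputable def sPDA (F K Z : ℕ) : ℕ :=
  sInf {n : ℕ | ∃ A : Fin F → Fin K → Option (Fin n), IsPDA F K Z A}

theorem pda_iff (F K n : ℕ) (hF : 2 ≤ F) :
    (∃ A : Fin F → Fin K → Option (Fin n), IsPDA F K (F - 1) A) ↔ K ≤ n * F := by
  constructor
  · rintro ⟨A, h1, h2, -, -⟩
    have hex : ∀ k : Fin K, ∃ p : Fin n × Fin F, A p.2 k = some p.1 := by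
      intro k
      by_contra hcon
      push Not at hcon
      have hall : ∀ j, A j k = none := by
        intro j
        cases hj : A j k with
        | none => rfl
        | some t => exact absurd hj (hcon (t, j))
      have h := h1 k
      simp [hall] at h
      omega
    choose f hf using hex
    have hinj : Function.Injective f := by
      intro a b hab
      have hb := hf b
      rw [← hab] at hb
      exact h2 _ _ _ _ (hf a) hb
    simpa using Fintype.card_le_of_injective f hinj
  · intro hK
    have hF0 : 0 < F := by omega
    have hlt : ∀ k : Fin K, k.1 / F < n := fun k =>
      Nat.div_lt_of_lt_mul (by rw [mul_comm]; exact lt_of_lt_of_le k.2 hK)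
    have key : ∀ (j : Fin F) (k : Fin K) (t : Fin n),
        (if j.1 = k.1 % F then some (⟨k.1 / F, hlt k⟩ : Fin n) else none) = some t →
          j.1 = k.1 % F ∧ k.1 / F = t.1 := by
      intro j k t h
      split_ifs at h with hj
      exact ⟨hj, by simpa using congrArg (Option.map Fin.val) h⟩
    refine ⟨fun j k => if j.1 = k.1 % F then some ⟨k.1 / F, hlt k⟩ else none, ?_, ?_, ?_, ?_⟩
    · intro k
      have : (Finset.univ.filter fun j : Fin F =>
          (if j.1 = k.1 % F then some (⟨k.1 / F, hlt k⟩ : Fin n) else none) = none)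
          = Finset.univ.erase ⟨k.1 % F, Nat.mod_lt _ hF0⟩ := by
        ext j
        simp [Fin.ext_iff]
      rw [this, Finset.card_erase_of_mem (Finset.mem_univ _)]
      simp
    · intro j k₁ k₂ t ha hb
      obtain ⟨a1, a2⟩ := key _ _ _ ha
      obtain ⟨b1, b2⟩ := key _ _ _ hb
      apply Fin.ext
      rw [← Nat.div_add_mod k₁.1 F, ← Nat.div_add_mod k₂.1 F, a2, b2, ← a1, ← b1]
    · intro j₁ j₂ k t ha hb
      exact Fin.ext ((key _ _ _ ha).1.trans (key _ _ _ hb).1.symm)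
    · intro j₁ j₂ k₁ k₂ t hj _ ha hb
      have a := (key _ _ _ ha).1
      have b := (key _ _ _ hb).1
      have hj' : j₁.1 ≠ j₂.1 := fun h => hj (Fin.ext h)
      exact ⟨if_neg (by rw [← b]; exact hj'), if_neg (by rw [← a]; exact hj'.symm)⟩

theorem stmt_1 (F K : ℕ) (hF : 2 ≤ F) (hK : 0 < K) :
    sPDA F K (F - 1) = ⌈(K : ℚ) / (F : ℚ)⌉₊ := by
  have hFq : (0 : ℚ) < F := by exact_mod_cast (by omega : 0 < F)
  have hset : {n : ℕ | ∃ A : Fin F → Fin K → Option (Fin n), IsPDA F K (F - 1) A}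
      = Set.Ici ⌈(K : ℚ) / (F : ℚ)⌉₊ := by
    ext n
    rw [Set.mem_setOf_eq, pda_iff F K n hF, Set.mem_Ici, Nat.ceil_le, div_le_iff₀ hFq]
    exact_mod_cast Iff.rfl
  unfold sPDA
  rw [hset, csInf_Ici]
end

section
/- For all positive integers F, K and t with F ≥ t·K, s(F, K, F−t) = t. -/
open scoped Classical

theorem stmt_2 (F K t : ℕ) (hF : 0 < F) (hK : 0 < K) (ht : 0 < t) (h : t * K ≤ F) :
    sPDA F K (F - t) = t := by
  have htF : t ≤ F := le_trans (Nat.le_mul_of_pos_right t hK) h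
  have hmem : t ∈ {n : ℕ | ∃ A : Fin F → Fin K → Option (Fin n), IsPDA F K (F - t) A} := by
    refine ⟨fun j k => if j.1 / t = k.1 then some ⟨j.1 % t, Nat.mod_lt _ ht⟩ else none,
      ?_, ?_, ?_, ?_⟩
    · intro k
      have hlt : ∀ s : Fin t, t * k.1 + s.1 < F := by
        intro s
        have h1 : t * (k.1 + 1) ≤ t * K := Nat.mul_le_mul_left t k.2
        have h2 := s.2
        rw [Nat.mul_add] at h1
        omega
      have himg : (Finset.univ.filter fun j : Fin F => ¬ (j.1 / t ≠ k.1)).card = t := by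
        have heq : (Finset.univ.filter fun j : Fin F => ¬ (j.1 / t ≠ k.1))
            = Finset.univ.image (fun s : Fin t => (⟨t * k.1 + s.1, hlt s⟩ : Fin F)) := by
          ext j
          simp only [Finset.mem_filter, Finset.mem_univ, true_and, Finset.mem_image, not_not]
          constructor
          · intro hj
            refine ⟨⟨j.1 % t, Nat.mod_lt _ ht⟩, Fin.ext ?_⟩
            simp only [← hj]
            exact Nat.div_add_mod _ _
          · rintro ⟨s, rfl⟩
            simp only
            rw [Nat.mul_add_div ht, Nat.div_eq_of_lt s.2, Nat.add_zero]
        rw [heq, Finset.card_image_of_injective]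
        · simp
        · intro a b hab
          have := congrArg Fin.val hab
          simp only at this
          exact Fin.ext (by omega)
      have hsum := Finset.card_filter_add_card_filter_not (s := (Finset.univ : Finset (Fin F)))
        (fun j : Fin F => j.1 / t ≠ k.1)
      rw [himg, Finset.card_univ, Fintype.card_fin] at hsum
      have hc : (Finset.univ.filter fun j : Fin F =>
          (if j.1 / t = k.1 then some (⟨j.1 % t, Nat.mod_lt _ ht⟩ : Fin t) else none) = none)
          = Finset.univ.filter fun j : Fin F => j.1 / t ≠ k.1 := by
        ext j
        simp
      simp only [hc]
      omega
    · intro j k₁ k₂ s h1 h2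
      simp only [Option.ite_none_right_eq_some] at h1 h2
      exact Fin.ext (h1.1.symm.trans h2.1)
    · intro j₁ j₂ k s h1 h2
      simp only [Option.ite_none_right_eq_some] at h1 h2
      have h3 := Option.some.inj (h1.2.trans h2.2.symm)
      have h4 := congrArg Fin.val h3
      simp only at h4
      apply Fin.ext
      rw [← Nat.div_add_mod j₁.1 t, ← Nat.div_add_mod j₂.1 t, h1.1, h2.1, h4]
    · intro j₁ j₂ k₁ k₂ s hj hk h1 h2
      simp only [Option.ite_none_right_eq_some] at h1 h2
      constructor
      · apply if_neg
        intro h3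
        exact hk (Fin.ext (h1.1.symm.trans h3))
      · apply if_neg
        intro h3
        exact hk (Fin.ext (h3.symm.trans h2.1))
  refine le_antisymm (Nat.sInf_le hmem) ?_
  obtain ⟨A, hA⟩ := Nat.sInf_mem (⟨t, hmem⟩ : Set.Nonempty _)
  change t ≤ sInf {n : ℕ | ∃ A : Fin F → Fin K → Option (Fin n), IsPDA F K (F - t) A}
  generalize sInf {n : ℕ | ∃ A : Fin F → Fin K → Option (Fin n), IsPDA F K (F - t) A} = n at A hA ⊢
  obtain ⟨hA1, -, hA3, -⟩ := hA
  have hsum := Finset.card_filter_add_card_filter_not (s := (Finset.univ : Finset (Fin F)))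
    (fun j : Fin F => A j ⟨0, hK⟩ = none)
  rw [hA1, Finset.card_univ, Fintype.card_fin] at hsum
  have hle : (Finset.univ.filter fun j : Fin F => ¬ A j ⟨0, hK⟩ = none).card
      ≤ ((Finset.univ : Finset (Fin n)).image some).card := by
    apply Finset.card_le_card_of_injOn (fun j => A j ⟨0, hK⟩)
    · intro j hj
      have hj' : ¬ A j ⟨0, hK⟩ = none := by simpa using hj
      obtain ⟨s, hs⟩ := Option.ne_none_iff_exists'.mp hj'
      simp [hs]
    · intro a ha b hb hab
      have ha' : ¬ A a ⟨0, hK⟩ = none := by simpa using ha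
      obtain ⟨s, hs⟩ := Option.ne_none_iff_exists'.mp ha'
      exact hA3 a b _ s hs (hab.symm.trans hs)
  have hle2 := hle.trans Finset.card_image_le
  rw [Finset.card_univ, Fintype.card_fin] at hle2
  omega
end

section
/- For every positive integer F and every integer Z with 0 ≤ Z ≤ F, s(F, 2, Z) = 2F − 3Z if F ≥ 2Z, and s(F, 2, Z) = F − Z otherwise. -/
open scoped Classical

theorem pda_card_aux (F a b : ℕ) (hb : b ≤ F) (p : Fin F → Prop) [DecidablePred p]
    (hp : ∀ j : Fin F, p j ↔ a ≤ j.val ∧ j.val < b) :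
    (Finset.univ.filter p).card = b - a := by
  rw [← Nat.card_Ico, ← Finset.card_map Fin.valEmbedding]
  congr 1
  ext x
  simp only [Finset.mem_map, Finset.mem_filter, Finset.mem_univ, true_and, hp,
    Fin.valEmbedding_apply, Finset.mem_Ico]
  constructor
  · rintro ⟨j, h, rfl⟩
    exact h
  · intro h
    exact ⟨⟨x, by omega⟩, h, rfl⟩

theorem pda_lower {n F Z : ℕ} (hF : 0 < F) (A : Fin F → Fin 2 → Option (Fin n)) (h : IsPDA F 2 Z A) :
    F - Z ≤ n ∧ 2 * F - 3 * Z ≤ n := by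
  obtain ⟨h1, h2, h3, h4⟩ := h
  let C : Fin 2 → Finset (Fin n) := fun k => Finset.univ.filter fun t => ∃ j, A j k = some t
  have hC : ∀ k, F - Z ≤ (C k).card := by
    intro k
    have hs : (Finset.univ.filter fun j : Fin F => ¬ A j k = none).card = F - Z := by
      have := Finset.card_filter_add_card_filter_not (s := (Finset.univ : Finset (Fin F)))
        (fun j => A j k = none)
      rw [h1 k, Finset.card_univ, Fintype.card_fin] at this
      omega
    rw [← hs]
    have key : ∀ j : Fin F, ¬ A j k = none → ∃ t, A j k = some t := fun j hj =>
      Option.ne_none_iff_exists'.1 hj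
    by_cases hn : Nonempty (Fin n)
    · obtain ⟨t0⟩ := hn
      refine Finset.card_le_card_of_injOn (fun j => (A j k).getD t0) ?_ ?_
      · intro j hj
        obtain ⟨t, ht⟩ := key j (by simpa using hj)
        simp only [C, ht, Option.getD_some, Finset.coe_filter, Finset.mem_univ, true_and,
          Set.mem_setOf_eq]
        exact ⟨j, ht⟩
      · intro i hi j hj hij
        obtain ⟨t, ht⟩ := key i (by simpa using hi)
        obtain ⟨u, hu⟩ := key j (by simpa using hj)
        simp only [ht, hu, Option.getD_some] at hij
        subst hij
        exact h3 i j k t ht hu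
    · rw [Finset.card_eq_zero.2]
      · exact Nat.zero_le _
      · apply Finset.filter_eq_empty_iff.2
        intro j _ hj
        obtain ⟨t, _⟩ := key j hj
        exact hn ⟨t⟩
  have hI : (C 0 ∩ C 1).card ≤ Z := by
    rw [← h1 1]
    have key : ∀ t ∈ C 0 ∩ C 1, ∃ j, A j 0 = some t ∧ A j 1 = none := by
      intro t ht
      simp only [C, Finset.mem_inter, Finset.mem_filter, Finset.mem_univ, true_and] at ht
      obtain ⟨⟨i, hi⟩, ⟨j, hj⟩⟩ := ht
      have hij : i ≠ j := by
        rintro rfl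
        exact absurd (h2 i 0 1 t hi hj) (by decide)
      exact ⟨i, hi, (h4 i j 0 1 t hij (by decide) hi hj).1⟩
    haveI : Nonempty (Fin F) := ⟨⟨0, hF⟩⟩
    choose! f hf using key
    refine Finset.card_le_card_of_injOn f ?_ ?_
    · intro t ht
      simpa using (hf t ht).2
    · intro t ht u hu htu
      have a := (hf t ht).1
      have b := (hf u hu).1
      rw [htu, b] at a
      exact (Option.some.inj a).symm
  have hU := Finset.card_union_add_card_inter (C 0) (C 1)
  have hn : (C 0 ∪ C 1).card ≤ n := by
    simpa using Finset.card_le_univ (C 0 ∪ C 1)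
  have hn0 : (C 0).card ≤ n := by
    simpa using Finset.card_le_univ (C 0)
  have a := hC 0
  have b := hC 1
  omega

/-- The optimal array. -/
def pdaOpt (n F Z : ℕ) (j : Fin F) (k : Fin 2) : Option (Fin n) :=
  if k = 0 then
    (if h : Z ≤ j.val ∧ j.val - Z < n then some ⟨j.val - Z, h.2⟩ else none)
  else if h : j.val < Z ∧ j.val < F - Z ∧ j.val < n then some ⟨j.val, h.2.2⟩
  else if h : 2 * Z ≤ j.val ∧ j.val + F - 3 * Z < n then some ⟨j.val + F - 3 * Z, h.2⟩
  else none

theorem pdaOpt_zero {n F Z : ℕ} (hn : F - Z ≤ n) (j : Fin F) (t : Fin n) :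
    pdaOpt n F Z j 0 = some t ↔ j.val = Z + t.val := by
  have := j.2
  unfold pdaOpt
  rw [if_pos rfl]
  split_ifs with h
  · rw [Option.some_inj, Fin.ext_iff]
    simp only
    omega
  · simp only [reduceCtorEq, false_iff]
    omega

theorem pdaOpt_zero_none {n F Z : ℕ} (hn : F - Z ≤ n) (j : Fin F) :
    pdaOpt n F Z j 0 = none ↔ j.val < Z := by
  have := j.2
  unfold pdaOpt
  rw [if_pos rfl]
  split_ifs with h
  · simp only [reduceCtorEq, false_iff]
    omega
  · simp only [true_iff]
    omega

theorem pdaOpt_one {n F Z : ℕ} (hn : F - Z ≤ n) (hn' : 2 * F - 3 * Z ≤ n) (j : Fin F)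
    (t : Fin n) : pdaOpt n F Z j 1 = some t ↔
      (j.val < Z ∧ j.val < F - Z ∧ t.val = j.val) ∨ (2 * Z ≤ j.val ∧ t.val + 3 * Z = j.val + F) := by
  have := j.2
  unfold pdaOpt
  rw [if_neg (by decide)]
  split_ifs with h h'
  · rw [Option.some_inj, Fin.ext_iff]
    simp only
    omega
  · rw [Option.some_inj, Fin.ext_iff]
    simp only
    omega
  · simp only [reduceCtorEq, false_iff]
    omega

theorem pdaOpt_one_none {n F Z : ℕ} (hn : F - Z ≤ n) (hn' : 2 * F - 3 * Z ≤ n) (j : Fin F) :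
    pdaOpt n F Z j 1 = none ↔ min Z (F - Z) ≤ j.val ∧ j.val < min F (2 * Z) := by
  have := j.2
  unfold pdaOpt
  rw [if_neg (by decide)]
  split_ifs with h h'
  · simp only [reduceCtorEq, false_iff]
    omega
  · simp only [reduceCtorEq, false_iff]
    omega
  · simp only [true_iff]
    omega

theorem pdaOpt_isPDA {n F Z : ℕ} (hZ : Z ≤ F) (hn : F - Z ≤ n) (hn' : 2 * F - 3 * Z ≤ n) :
    IsPDA F 2 Z (pdaOpt n F Z) := by
  refine ⟨?_, ?_, ?_, ?_⟩
  · rw [Fin.forall_fin_two]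
    constructor
    · rw [pda_card_aux F 0 Z hZ _ (fun j => by rw [pdaOpt_zero_none hn]; omega)]
      omega
    · rw [pda_card_aux F _ _ (min_le_left _ _) _ (fun j => pdaOpt_one_none hn hn' j)]
      omega
  · intro j
    simp only [Fin.forall_fin_two, pdaOpt_zero hn, pdaOpt_one hn hn', Fin.ext_iff]
    have := j.2
    refine ⟨⟨?_, ?_⟩, ⟨?_, ?_⟩⟩ <;> intro t <;> simp <;> omega
  · intro i j
    simp only [Fin.forall_fin_two, pdaOpt_zero hn, pdaOpt_one hn hn', Fin.ext_iff]
    have := j.2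
    have := i.2
    refine ⟨?_, ?_⟩ <;> intro t <;> omega
  · intro i j
    simp only [Fin.forall_fin_two, pdaOpt_zero hn, pdaOpt_one hn hn', pdaOpt_zero_none hn,
      pdaOpt_one_none hn hn', ne_eq, Fin.ext_iff]
    have := j.2
    have := i.2
    refine ⟨⟨?_, ?_⟩, ⟨?_, ?_⟩⟩ <;> intro t <;> simp <;> omega

theorem stmt_3 (F Z : ℕ) (hF : 0 < F) (hZ : Z ≤ F) :
    sPDA F 2 Z = if 2 * Z ≤ F then 2 * F - 3 * Z else F - Z := by
  have main : ∀ m : ℕ, F - Z ≤ m → 2 * F - 3 * Z ≤ m → (m = F - Z ∨ m = 2 * F - 3 * Z) →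
      sPDA F 2 Z = m := by
    intro m h1 h2 h3
    apply le_antisymm
    · exact Nat.sInf_le ⟨_, pdaOpt_isPDA hZ h1 h2⟩
    · refine le_csInf ⟨m, ⟨_, pdaOpt_isPDA hZ h1 h2⟩⟩ ?_
      rintro b ⟨A, hA⟩
      have := pda_lower hF A hA
      omega
  split_ifs with h <;> apply main <;> omega
end

section
/- For any S-PDA with parameters (F, K, Z), the alphabet satisfies |S| ≥ ⌈K(F − Z)/(Z + 1)⌉; consequently s(F, K, Z) ≥ ⌈K(F − Z)/(Z + 1)⌉. -/
open scoped Classical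

theorem pda_symbol_card {S : Type} {F K Z : ℕ} {A : Fin F → Fin K → Option S}
    (h : IsPDA F K Z A) (t : S) :
    (Finset.univ.filter fun p : Fin F × Fin K => A p.1 p.2 = some t).card ≤ Z + 1 := by
  obtain ⟨h1, h2, h3, h4⟩ := h
  rcases Finset.eq_empty_or_nonempty
    (Finset.univ.filter fun p : Fin F × Fin K => A p.1 p.2 = some t) with he | ⟨⟨j, k⟩, hp⟩
  · rw [he]; simp
  · have hjk : A j k = some t := by simpa using hp
    rw [← h1 k]
    refine le_trans ?_ (Finset.card_insert_le j _)
    refine Finset.card_le_card_of_injOn Prod.fst ?_ ?_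
    · rintro ⟨j', k'⟩ hq
      have hq' : A j' k' = some t := by simpa using hq
      by_cases hj : j' = j
      · simp [hj]
      · have hk : k' ≠ k := by
          rintro rfl
          exact hj (h3 _ _ _ _ hq' hjk)
        have := (h4 j' j k' k t hj hk hq' hjk).1
        simp [this]
    · rintro ⟨j₁, k₁⟩ ha ⟨j₂, k₂⟩ hb hab
      have ha' : A j₁ k₁ = some t := by simpa using ha
      have hb' : A j₂ k₂ = some t := by simpa using hb
      have hab' : j₁ = j₂ := hab
      subst hab'
      rw [h2 _ _ _ _ ha' hb']

theorem pda_total {S : Type} {F K Z : ℕ} {A : Fin F → Fin K → Option S}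
    (h : IsPDA F K Z A) :
    (Finset.univ.filter fun p : Fin F × Fin K => A p.1 p.2 ≠ none).card = K * (F - Z) := by
  have hcol : ∀ k : Fin K,
      (Finset.univ.filter fun j : Fin F => A j k ≠ none).card = F - Z := by
    intro k
    have h1 := h.1 k
    have h2 := Finset.card_filter_add_card_filter_not (s := (Finset.univ : Finset (Fin F)))
      (fun j : Fin F => A j k = none)
    rw [Finset.card_univ, Fintype.card_fin, h1] at h2
    have h3 : (Finset.univ.filter fun j : Fin F => A j k ≠ none).card
      = (Finset.univ.filter fun j : Fin F => ¬ A j k = none).card := by congr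
    omega
  rw [Finset.card_filter, Fintype.sum_prod_type_right]
  simp only [← Finset.card_filter]
  rw [Finset.sum_congr rfl (fun k _ => hcol k)]
  simp

theorem pda_bound {S : Type} [Fintype S] {F K Z : ℕ} {A : Fin F → Fin K → Option S}
    (h : IsPDA F K Z A) :
    ⌈((K * (F - Z) : ℕ) : ℚ) / ((Z : ℚ) + 1)⌉₊ ≤ Fintype.card S := by
  have key : K * (F - Z) ≤ Fintype.card S * (Z + 1) := by
    rw [← pda_total h]
    have hsub : (Finset.univ.filter fun p : Fin F × Fin K => A p.1 p.2 ≠ none) ⊆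
        (Finset.univ : Finset S).biUnion
          (fun t => Finset.univ.filter fun p : Fin F × Fin K => A p.1 p.2 = some t) := by
      intro p hp
      have hp' : A p.1 p.2 ≠ none := by simpa using hp
      obtain ⟨t, ht⟩ := Option.ne_none_iff_exists'.mp hp'
      simp [ht]
    refine (Finset.card_le_card hsub).trans ?_
    exact Finset.card_biUnion_le_card_mul _ _ _ (fun t _ => pda_symbol_card h t)
  rw [Nat.ceil_le, div_le_iff₀ (by positivity)]
  exact_mod_cast key

theorem pda_exists (F K Z : ℕ) (hZ : Z ≤ F) :
    ∃ A : Fin F → Fin K → Option (Fin (F * K)), IsPDA F K Z A := by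
  have inj : ∀ (j₁ j₂ : Fin F) (k₁ k₂ : Fin K) (t : Fin (F * K)),
      (if j₁.val < Z then none else some (finProdFinEquiv (j₁, k₁))) = some t →
      (if j₂.val < Z then none else some (finProdFinEquiv (j₂, k₂))) = some t →
      j₁ = j₂ ∧ k₁ = k₂ := by
    intro j₁ j₂ k₁ k₂ t h1 h2
    split_ifs at h1 h2
    have := finProdFinEquiv.injective ((Option.some.inj h1).trans (Option.some.inj h2).symm)
    simpa using this
  refine ⟨fun j k => if j.val < Z then none else some (finProdFinEquiv (j, k)), ?_, ?_, ?_, ?_⟩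
  · intro k
    simp [Fin.card_filter_val_lt, hZ]
  · intro j k₁ k₂ t h1 h2
    exact (inj _ _ _ _ t h1 h2).2
  · intro j₁ j₂ k t h1 h2
    exact (inj _ _ _ _ t h1 h2).1
  · intro j₁ j₂ k₁ k₂ t hj _ h1 h2
    exact absurd (inj _ _ _ _ t h1 h2).1 hj

theorem stmt_5 (F K Z : ℕ) (hF : 0 < F) (hK : 0 < K) (hZ : Z ≤ F) :
    (∀ (S : Type) (_ : Fintype S) (A : Fin F → Fin K → Option S),
      IsPDA F K Z A → ⌈((K * (F - Z) : ℕ) : ℚ) / ((Z : ℚ) + 1)⌉₊ ≤ Fintype.card S) ∧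
    ⌈((K * (F - Z) : ℕ) : ℚ) / ((Z : ℚ) + 1)⌉₊ ≤ sPDA F K Z := by
  refine ⟨fun S _ A h => pda_bound h, ?_⟩
  have hne : {n : ℕ | ∃ A : Fin F → Fin K → Option (Fin n), IsPDA F K Z A}.Nonempty :=
    ⟨F * K, pda_exists F K Z hZ⟩
  obtain ⟨A, hA⟩ := Nat.sInf_mem hne
  have := pda_bound hA
  rw [Fintype.card_fin] at this
  exact this
end

section
/- Let F, K be positive integers and 0 ≤ Z < F. If there exists an S-PDA with parameters (F, K, Z) and |S| = ⌈K(F − Z)/(Z + 1)⌉ (i.e., an RPDA(F, K, Z) exists), then K > (Z + 1)(F − Z − 1)/(F − Z). -/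
open scoped Classical

theorem stmt_7 (F K Z : ℕ) (hF : 0 < F) (hK : 0 < K) (hZ : Z < F)
    (h : ∃ (S : Type) (_ : Fintype S) (A : Fin F → Fin K → Option S),
      IsPDA F K Z A ∧
        Fintype.card S = ⌈((K * (F - Z) : ℕ) : ℚ) / ((Z : ℚ) + 1)⌉₊) :
    (K : ℚ) > (((Z + 1) * (F - Z - 1) : ℕ) : ℚ) / ((F - Z : ℕ) : ℚ) := by
  obtain ⟨S, _, A, ⟨hcol, -, hinj, -⟩, hS⟩ := h
  have hle : F - Z ≤ Fintype.card S := by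
    have h0 := hcol ⟨0, hK⟩
    have hc := Finset.card_filter_add_card_filter_not (s := (Finset.univ : Finset (Fin F)))
      (fun j : Fin F => A j ⟨0, hK⟩ = none)
    rw [h0, Finset.card_univ, Fintype.card_fin] at hc
    have h1 : (Finset.univ.filter fun j : Fin F => ¬ A j ⟨0, hK⟩ = none).card
        ≤ ((Finset.univ : Finset S).image some).card := by
      apply Finset.card_le_card_of_injOn (fun j => A j ⟨0, hK⟩)
      · intro j hj
        obtain ⟨t, ht⟩ := Option.ne_none_iff_exists'.mp (by simpa using hj)
        simp [ht]
      · intro j hj j' hj' hjj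
        obtain ⟨t, ht⟩ := Option.ne_none_iff_exists'.mp (by simpa using hj)
        have hjj2 : A j ⟨0, hK⟩ = A j' ⟨0, hK⟩ := hjj
        exact hinj j j' _ t ht (hjj2 ▸ ht)
    have h2 : ((Finset.univ : Finset S).image some).card ≤ Fintype.card S := Finset.card_image_le
    omega
  have hlt : F - Z - 1 < ⌈((K * (F - Z) : ℕ) : ℚ) / ((Z : ℚ) + 1)⌉₊ := by
    rw [← hS]; omega
  rw [Nat.lt_ceil, lt_div_iff₀ (by positivity)] at hlt
  have hpos : (0 : ℚ) < ((F - Z : ℕ) : ℚ) := by exact_mod_cast Nat.sub_pos_of_lt hZ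
  rw [gt_iff_lt, div_lt_iff₀ hpos]
  rw [Nat.cast_mul] at hlt ⊢
  rw [Nat.cast_mul] at *
  push_cast at hlt ⊢
  linarith
end

section
/- Let F, K be positive integers and 0 < Z < F. If there exists an S-PDA with parameters (F, K, Z) such that (Z + 1)·|S| = K(F − Z), then the binomial coefficient C(F, Z) divides K, i.e., K = ℓ·C(F, Z) for some integer ℓ ≥ 1. -/
open scoped Classical

theorem pda_const {F Z : ℕ} (N : Finset (Fin F) → ℕ)
    (hN : ∀ U : Finset (Fin F), U.card = Z + 1 → ∀ i ∈ U, ∀ j ∈ U, N (U.erase i) = N (U.erase j)) :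
    ∀ (n : ℕ) (T T' : Finset (Fin F)), T.card = Z → T'.card = Z → (T \ T').card = n →
      N T = N T' := by
  intro n
  induction n with
  | zero =>
    intro T T' h1 h2 h3
    have h4 : T ⊆ T' := by
      rw [Finset.card_eq_zero, Finset.sdiff_eq_empty_iff_subset] at h3
      exact h3
    rw [Finset.eq_of_subset_of_card_le h4 (by omega)]
  | succ n ih =>
    intro T T' h1 h2 h3
    have h5 : (T' \ T).card = n + 1 := by
      rw [← h3]; exact Finset.card_sdiff_comm (by omega)
    obtain ⟨b, hb⟩ : (T \ T').Nonempty := by rw [← Finset.card_pos]; omega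
    obtain ⟨a, ha⟩ : (T' \ T).Nonempty := by rw [← Finset.card_pos]; omega
    rw [Finset.mem_sdiff] at ha hb
    have hU : (insert a T).card = Z + 1 := by
      rw [Finset.card_insert_of_notMem ha.2, h1]
    have h6 := hN (insert a T) hU a (by simp) b (by simp [hb.1])
    rw [Finset.erase_insert ha.2] at h6
    rw [h6]
    apply ih _ _ _ h2
    · have : ((insert a T).erase b \ T') = (T \ T').erase b := by
        ext x; simp only [Finset.mem_sdiff, Finset.mem_erase, Finset.mem_insert]
        constructor
        · rintro ⟨⟨h1, rfl | h2⟩, h3⟩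
          · exact absurd ha.1 h3
          · exact ⟨h1, h2, h3⟩
        · rintro ⟨h1, h2, h3⟩
          exact ⟨⟨h1, Or.inr h2⟩, h3⟩
      rw [this, Finset.card_erase_of_mem (Finset.mem_sdiff.2 hb), h3]; rfl
    · rw [Finset.card_erase_of_mem (by simp [hb.1]), hU]; rfl

theorem stmt_8 (F K Z : ℕ) (hF : 0 < F) (hK : 0 < K) (hZ0 : 0 < Z) (hZ : Z < F)
    (h : ∃ (S : Type) (_ : Fintype S) (A : Fin F → Fin K → Option S),
      IsPDA F K Z A ∧ (Z + 1) * Fintype.card S = K * (F - Z)) :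
    ∃ ℓ : ℕ, 1 ≤ ℓ ∧ K = ℓ * F.choose Z := by
  obtain ⟨S, _, A, ⟨hE, hrow, hcol, hx⟩, hS⟩ := h
  set E : Fin K → Finset (Fin F) := fun k => Finset.univ.filter fun j => A j k = none with hEdef
  set R : S → Finset (Fin F) := fun s => Finset.univ.filter fun j => ∃ k, A j k = some s with hRdef
  have hEc : ∀ k, (E k).card = Z := hE
  have hsub : ∀ j k s, A j k = some s → (R s).erase j ⊆ E k := by
    intro j k s hs i hi
    simp only [hRdef, hEdef, Finset.mem_erase, Finset.mem_filter, Finset.mem_univ, true_and] at hi ⊢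
    obtain ⟨hij, k', hk'⟩ := hi
    have hkk : k' ≠ k := by
      rintro rfl
      exact hij (hcol _ _ _ _ hk' hs)
    exact (hx i j k' k s hij hkk hk' hs).1
  have hmem : ∀ j k s, A j k = some s → j ∈ R s := by
    intro j k s hs
    simp only [hRdef, Finset.mem_filter, Finset.mem_univ, true_and]
    exact ⟨k, hs⟩
  have hRle : ∀ s, (R s).card ≤ Z + 1 := by
    intro s
    rcases (R s).eq_empty_or_nonempty with h0 | ⟨j, hj⟩
    · simp [h0]
    · have hj' := hj
      simp only [hRdef, Finset.mem_filter, Finset.mem_univ, true_and] at hj'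
      obtain ⟨k, hk⟩ := hj'
      have := Finset.card_le_card (hsub j k s hk)
      rw [Finset.card_erase_of_mem hj, hEc] at this
      omega
  have hsum : ∑ s, (R s).card = ∑ _s : S, (Z + 1) := by
    have h1 : ∀ s, (R s).card = ∑ j, ∑ k, if A j k = some s then 1 else 0 := by
      intro s
      rw [hRdef, Finset.card_filter]
      refine Finset.sum_congr rfl fun j _ => ?_
      split_ifs with hj
      · obtain ⟨k, hk⟩ := hj
        rw [Finset.sum_eq_single k]
        · simp [hk]
        · intro k' _ hne
          rw [if_neg]
          intro hk'
          exact hne (hrow _ _ _ _ hk' hk)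
        · simp
      · symm
        apply Finset.sum_eq_zero
        intro k _
        rw [if_neg]
        exact fun hk => hj ⟨k, hk⟩
    have h2 : ∀ k, ∑ j, ∑ s, (if A j k = some s then 1 else 0) = F - Z := by
      intro k
      have h3 : ∀ j, ∑ s, (if A j k = some s then 1 else 0) = if ¬ A j k = none then 1 else 0 := by
        intro j
        cases A j k <;> simp
      simp only [h3]
      rw [← Finset.card_filter]
      have := Finset.card_filter_add_card_filter_not (s := (Finset.univ : Finset (Fin F))) (fun j => A j k = none)
      rw [hE k, Finset.card_univ, Fintype.card_fin] at this
      omega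
    calc ∑ s, (R s).card = ∑ s, ∑ j, ∑ k, (if A j k = some s then 1 else 0) := by simp only [h1]
      _ = ∑ s, ∑ k, ∑ j, (if A j k = some s then 1 else 0) :=
          Finset.sum_congr rfl fun s _ => Finset.sum_comm
      _ = ∑ k, ∑ s, ∑ j, (if A j k = some s then 1 else 0) := Finset.sum_comm
      _ = ∑ k, ∑ j, ∑ s, (if A j k = some s then 1 else 0) :=
          Finset.sum_congr rfl fun s _ => Finset.sum_comm
      _ = ∑ _s : S, (Z + 1) := by
          simp only [h2]
          simp only [Finset.sum_const, Finset.card_univ, Fintype.card_fin, smul_eq_mul]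
          rw [← hS, mul_comm]
  have hRc : ∀ s, (R s).card = Z + 1 := by
    intro s
    exact (Finset.sum_eq_sum_iff_of_le (fun s _ => hRle s)).1 hsum s (Finset.mem_univ s)
  have heq : ∀ j k s, A j k = some s → (R s).erase j = E k := by
    intro j k s hs
    apply Finset.eq_of_subset_of_card_le (hsub j k s hs)
    rw [Finset.card_erase_of_mem (hmem j k s hs), hEc, hRc]; simp
  set N : Finset (Fin F) → ℕ := fun T => (Finset.univ.filter fun k => E k = T).card with hNdef
  have hM : ∀ U : Finset (Fin F), ∀ i ∈ U,
      N (U.erase i) = ((Finset.univ.filter fun s => R s = U).map Function.Embedding.some).card := by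
    intro U i hi
    apply Finset.card_nbij (fun k => A i k)
    · intro k hk
      simp only [Finset.coe_filter, Finset.mem_univ, true_and, Set.mem_setOf_eq, Finset.mem_filter] at hk
      have hik : A i k ≠ none := by
        intro h0
        have : i ∈ E k := by simp [hEdef, h0]
        rw [hk] at this
        simp at this
      obtain ⟨s, hs⟩ := Option.ne_none_iff_exists'.1 hik
      have h1 := heq i k s hs
      have : R s = U := by
        rw [← Finset.insert_erase (hmem i k s hs), h1, hk, Finset.insert_erase hi]
      simp [hs, this]
    · intro k hk k' hk' hkk
      simp only [Finset.coe_filter, Finset.mem_univ, true_and, Set.mem_setOf_eq] at hk hkk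
      have hik : A i k ≠ none := by
        intro h0
        have : i ∈ E k := by simp [hEdef, h0]
        rw [hk] at this
        simp at this
      obtain ⟨s, hs⟩ := Option.ne_none_iff_exists'.1 hik
      exact hrow i k k' s hs (hkk ▸ hs)
    · intro o ho
      simp only [Finset.coe_map, Finset.coe_filter, Finset.mem_univ, true_and, Set.mem_image,
        Set.mem_setOf_eq] at ho ⊢
      obtain ⟨s, hs, rfl⟩ := ho
      have hi' := hi
      rw [← hs] at hi'
      simp only [hRdef, Finset.mem_filter, Finset.mem_univ, true_and] at hi'
      obtain ⟨k, hk⟩ := hi'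
      refine ⟨k, ?_, hk⟩
      rw [← heq i k s hk, hs]
  have hconst := pda_const (Z := Z) N (fun U _ i hi j hj => by rw [hM U i hi, hM U j hj])
  have hKs : K = ∑ T ∈ Finset.powersetCard Z (Finset.univ : Finset (Fin F)), N T := by
    have := Finset.card_eq_sum_card_fiberwise (f := E) (s := Finset.univ)
      (t := Finset.powersetCard Z (Finset.univ : Finset (Fin F)))
      (fun k _ => by simp [Finset.mem_powersetCard, hEc])
    rw [Finset.card_univ, Fintype.card_fin] at this
    exact this
  have hfin : K = N (E ⟨0, hK⟩) * F.choose Z := by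
    conv_lhs => rw [hKs]
    rw [Finset.sum_congr rfl (fun T hT => hconst _ T (E ⟨0, hK⟩) (Finset.mem_powersetCard.1 hT).2 (hEc _) rfl)]
    rw [Finset.sum_const, Finset.card_powersetCard, Finset.card_univ, Fintype.card_fin, smul_eq_mul, mul_comm]
  refine ⟨_, ?_, hfin⟩
  rcases Nat.eq_zero_or_pos (N (E ⟨0, hK⟩)) with h0 | h0
  · rw [h0] at hfin; omega
  · exact h0
end

section
/- For all integers Z ≥ 1 and F ≥ Z + 1, there exists an S-PDA with parameters (F, C(F, Z), Z) and |S| = C(F, Z+1) = C(F, Z)·(F − Z)/(Z + 1); that is, an RPDA(F, C(F, Z), Z) exists. -/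
open scoped Classical

theorem stmt_12 (F Z : ℕ) (hZ : 1 ≤ Z) (hF : Z + 1 ≤ F) :
    (∃ A : Fin F → Fin (F.choose Z) → Option (Fin (F.choose (Z + 1))),
      IsPDA F (F.choose Z) Z A) ∧
    F.choose (Z + 1) = F.choose Z * (F - Z) / (Z + 1) := by
  refine ⟨?_, ?_⟩
  · have e1 : Nonempty (Fin (F.choose Z) ≃ {s : Finset (Fin F) // s.card = Z}) :=
      ⟨(Fintype.equivFinOfCardEq (by simp)).symm⟩
    have e2 : Nonempty ({s : Finset (Fin F) // s.card = Z + 1} ≃ Fin (F.choose (Z + 1))) :=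
      ⟨Fintype.equivFinOfCardEq (by simp)⟩
    obtain ⟨e⟩ := e1
    obtain ⟨g⟩ := e2
    let A : Fin F → Fin (F.choose Z) → Option (Fin (F.choose (Z + 1))) := fun j k =>
      if h : j ∈ (e k).1 then none
      else some (g ⟨insert j (e k).1, by rw [Finset.card_insert_of_notMem h, (e k).2]⟩)
    have hnone : ∀ j k, A j k = none ↔ j ∈ (e k).1 := by
      intro j k
      by_cases h : j ∈ (e k).1 <;> simp [A, h]
    have hsome : ∀ j k t, A j k = some t →
        j ∉ (e k).1 ∧ insert j (e k).1 = (g.symm t).1 := by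
      intro j k t ht
      by_cases h : j ∈ (e k).1
      · simp [A, h] at ht
      · refine ⟨h, ?_⟩
        simp only [A, h, dite_false, Option.some.injEq] at ht
        rw [← ht]
        simp
    refine ⟨A, ?_, ?_, ?_, ?_⟩
    · intro k
      simp only [hnone]
      rw [Finset.filter_univ_mem]
      exact (e k).2
    · intro j k₁ k₂ t h1 h2
      obtain ⟨a1, b1⟩ := hsome _ _ _ h1
      obtain ⟨a2, b2⟩ := hsome _ _ _ h2
      apply e.injective
      apply Subtype.ext
      rw [← Finset.erase_insert a1, ← Finset.erase_insert a2, b1, b2]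
    · intro j₁ j₂ k t h1 h2
      obtain ⟨a1, b1⟩ := hsome _ _ _ h1
      obtain ⟨a2, b2⟩ := hsome _ _ _ h2
      have : j₁ ∈ insert j₂ (e k).1 := by
        rw [b2, ← b1]; exact Finset.mem_insert_self _ _
      exact (Finset.mem_insert.1 this).resolve_right a1
    · intro j₁ j₂ k₁ k₂ t hj _ h1 h2
      obtain ⟨a1, b1⟩ := hsome _ _ _ h1
      obtain ⟨a2, b2⟩ := hsome _ _ _ h2
      rw [hnone, hnone]
      have m1 : j₁ ∈ insert j₂ (e k₂).1 := by
        rw [b2, ← b1]; exact Finset.mem_insert_self _ _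
      have m2 : j₂ ∈ insert j₁ (e k₁).1 := by
        rw [b1, ← b2]; exact Finset.mem_insert_self _ _
      exact ⟨(Finset.mem_insert.1 m1).resolve_left hj,
        (Finset.mem_insert.1 m2).resolve_left hj.symm⟩
  · rw [← Nat.choose_succ_right_eq]
    exact (Nat.mul_div_cancel _ (Nat.succ_pos Z)).symm
end

section
/- Let F ≥ 2 and K ≥ 1 be integers and write K = ℓF + i with ℓ ≥ 0 and 0 ≤ i < F. Then s(F, K, 1) = ℓ·F(F − 1)/2 + i(i − 1)/2 + i(F − i). -/
open scoped Classical

theorem pda_ub (F K : ℕ) (hF : 2 ≤ F) :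
    ∃ A : Fin F → Fin K → Option (Fin (∑ k ∈ Finset.range K, (F - k % F - 1))), IsPDA F K 1 A := by
  set T : Finset (Σ _ : ℕ, ℕ) := (Finset.range K).sigma (fun k => Finset.Ioo (k % F) F) with hT
  have hc : T.card = ∑ k ∈ Finset.range K, (F - k % F - 1) := by
    simp [hT, Finset.card_sigma, Nat.card_Ioo]
  rw [← hc]
  have hmem : ∀ (j : Fin F) (k : Fin K), (j : ℕ) ≠ k % F →
      (⟨(k:ℕ) / F * F + min (j:ℕ) (k % F), max (j:ℕ) (k % F)⟩ : Σ _ : ℕ, ℕ) ∈ T := by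
    intro j k h
    have h1 := Nat.mod_lt (k:ℕ) (show F > 0 by omega)
    have h2 := Nat.div_add_mod' (k:ℕ) F
    have h3 := j.2
    have h4 := k.2
    have h5 : ((k:ℕ) / F * F + min (j:ℕ) (k % F)) % F = min (j:ℕ) (k % F) := by
      rw [Nat.mul_add_mod_self_right, Nat.mod_eq_of_lt (by omega)]
    simp only [hT, Finset.mem_sigma, Finset.mem_range, Finset.mem_Ioo, h5]
    omega
  let A : Fin F → Fin K → Option (Fin T.card) := fun j k =>
    if h : (j : ℕ) = k % F then none else some (T.equivFin ⟨_, hmem j k h⟩)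
  have hnone : ∀ j k, A j k = none ↔ (j : ℕ) = k % F := by
    intro j k
    by_cases h : (j : ℕ) = k % F <;> simp [A, h]
  have key : ∀ j₁ k₁ j₂ k₂ t, A j₁ k₁ = some t → A j₂ k₂ = some t →
      (j₁:ℕ) ≠ k₁ % F ∧ (j₂:ℕ) ≠ k₂ % F ∧ (k₁:ℕ) / F = k₂ / F ∧
      min (j₁:ℕ) (k₁ % F) = min (j₂:ℕ) (k₂ % F) ∧ max (j₁:ℕ) (k₁ % F) = max (j₂:ℕ) (k₂ % F) := by
    intro j₁ k₁ j₂ k₂ t h1 h2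
    have n1 : ¬ (j₁:ℕ) = k₁ % F := by rw [← hnone, h1]; simp
    have n2 : ¬ (j₂:ℕ) = k₂ % F := by rw [← hnone, h2]; simp
    have h := h1.trans h2.symm
    simp only [A, n1, n2, dif_neg, not_false_eq_true, Option.some.injEq,
      EmbeddingLike.apply_eq_iff_eq, Subtype.mk.injEq, Sigma.mk.injEq, heq_eq_eq] at h
    obtain ⟨ha, hb⟩ := h
    have e1 : min (j₁:ℕ) (k₁ % F) < F := by omega
    have e2 : min (j₂:ℕ) (k₂ % F) < F := by omega
    have hm := congrArg (· % F) ha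
    simp only [Nat.mul_add_mod_self_right, Nat.mod_eq_of_lt e1, Nat.mod_eq_of_lt e2] at hm
    refine ⟨n1, n2, ?_, hm, hb⟩
    rw [hm] at ha
    exact Nat.eq_of_mul_eq_mul_right (by omega) (Nat.add_right_cancel ha)
  have kext : ∀ k₁ k₂ : Fin K, (k₁:ℕ) / F = k₂ / F → (k₁:ℕ) % F = k₂ % F → k₁ = k₂ := by
    intro k₁ k₂ h1 h2
    ext
    rw [← Nat.div_add_mod' (k₁:ℕ) F, h1, h2, Nat.div_add_mod']
  refine ⟨A, ?_, ?_, ?_, ?_⟩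
  · intro k
    rw [Finset.card_eq_one]
    refine ⟨⟨k % F, Nat.mod_lt _ (by omega)⟩, ?_⟩
    ext j
    simp [hnone, Fin.ext_iff]
  · intro j k₁ k₂ t h1 h2
    obtain ⟨n1, n2, hq, hmi, hma⟩ := key _ _ _ _ _ h1 h2
    exact kext _ _ hq (by omega)
  · intro j₁ j₂ k t h1 h2
    obtain ⟨n1, n2, hq, hmi, hma⟩ := key _ _ _ _ _ h1 h2
    ext; omega
  · intro j₁ j₂ k₁ k₂ t hj hk h1 h2
    obtain ⟨n1, n2, hq, hmi, hma⟩ := key _ _ _ _ _ h1 h2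
    have : (j₁:ℕ) ≠ j₂ := fun h => hj (Fin.ext h)
    rw [hnone, hnone]
    omega

theorem pda_sum1 (F i : ℕ) (hi : i ≤ F) :
    ∑ k ∈ Finset.range i, (F - k % F - 1) = i * (i - 1) / 2 + i * (F - i) := by
  have h : ∀ i, i ≤ F → 2 * ∑ k ∈ Finset.range i, ((F - k % F - 1 : ℕ) : ℤ)
      = i * (i - 1) + 2 * (i * (F - i)) := by
    intro i
    induction i with
    | zero => simp
    | succ n ih =>
      intro hn
      rw [Finset.sum_range_succ, mul_add, ih (by omega), Nat.mod_eq_of_lt (by omega),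
        Nat.sub_sub, Nat.cast_sub (by omega)]
      push_cast
      ring
  have h1 := h i hi
  have h2 : 2 * (i * (i - 1) / 2) = i * (i - 1) :=
    Nat.mul_div_cancel' (Nat.even_mul_pred_self i).two_dvd
  have h3 : ((i * (i - 1) : ℕ) : ℤ) = i * (i - 1) := by
    rcases i with _ | i <;> simp
  have h4 : ((i * (F - i) : ℕ) : ℤ) = i * (F - i) := by
    push_cast [Nat.cast_sub hi]; ring
  rw [← h3, ← h4] at h1
  norm_cast at h1
  omega

theorem pda_sum (F i ℓ : ℕ) (hi : i < F) :
    ∑ k ∈ Finset.range (ℓ * F + i), (F - k % F - 1)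
      = ℓ * (F * (F - 1) / 2) + i * (i - 1) / 2 + i * (F - i) := by
  induction ℓ with
  | zero => simp [pda_sum1 F i hi.le]
  | succ n ih =>
    rw [show (n + 1) * F + i = F + (n * F + i) by ring, Finset.sum_range_add, pda_sum1 F F le_rfl]
    simp only [Nat.add_mod_left, ih]
    simp
    ring

theorem abs_sum_lb (F : ℕ) (d : Fin F → ℤ) (i : ℤ) (hi0 : 0 ≤ i) (hi : i ≤ F)
    (hs : ∑ a, d a = i) : 2 * (i * (F - i)) ≤ ∑ a, ∑ b, |d a - d b| := by
  set P := Finset.univ.filter (fun a => 0 < d a) with hP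
  set N := Finset.univ.filter (fun a => ¬ 0 < d a) with hN
  have hpn : (P.card : ℤ) + N.card = F := by
    have := Finset.card_filter_add_card_filter_not (s := (Finset.univ : Finset (Fin F)))
      (fun a => 0 < d a)
    simp only [Finset.card_univ, Fintype.card_fin] at this
    exact_mod_cast this
  have hsum : ∑ a ∈ P, d a + ∑ a ∈ N, d a = i := by
    rw [← hs]; exact Finset.sum_filter_add_sum_filter_not _ _ _
  have hA : (P.card : ℤ) ≤ ∑ a ∈ P, d a := by
    have := Finset.card_nsmul_le_sum P d 1 (by intro x hx; simp [hP] at hx; omega)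
    simpa using this
  have hB : ∑ a ∈ N, d a ≤ 0 := Finset.sum_nonpos (by intro x hx; simp [hN] at hx; omega)
  have split : ∀ f : Fin F → ℤ, ∑ a, f a = ∑ a ∈ P, f a + ∑ a ∈ N, f a := fun f =>
    (Finset.sum_filter_add_sum_filter_not _ _ _).symm
  have e1 : ∑ a ∈ P, ∑ b ∈ N, (d a - d b) = N.card * ∑ a ∈ P, d a - P.card * ∑ a ∈ N, d a := by
    simp [Finset.sum_sub_distrib, Finset.mul_sum]
  have b1 : ∑ a ∈ P, ∑ b ∈ N, (d a - d b) ≤ ∑ a ∈ P, ∑ b, |d a - d b| := by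
    refine Finset.sum_le_sum fun a _ => ?_
    refine (Finset.sum_le_sum fun b _ => le_abs_self _).trans ?_
    exact Finset.sum_le_sum_of_subset_of_nonneg (Finset.subset_univ _) fun _ _ _ => abs_nonneg _
  have b2 : ∑ a ∈ P, ∑ b ∈ N, (d a - d b) ≤ ∑ a ∈ N, ∑ b, |d a - d b| := by
    rw [Finset.sum_comm]
    refine Finset.sum_le_sum fun a _ => ?_
    refine (Finset.sum_le_sum fun b _ => (le_abs_self _).trans_eq (abs_sub_comm _ _)).trans ?_
    exact Finset.sum_le_sum_of_subset_of_nonneg (Finset.subset_univ _) fun _ _ _ => abs_nonneg _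
  have main : i * (F - i) ≤ N.card * ∑ a ∈ P, d a - P.card * ∑ a ∈ N, d a := by
    have hp0 : (0:ℤ) ≤ P.card := by positivity
    have hn0 : (0:ℤ) ≤ N.card := by positivity
    generalize (P.card : ℤ) = p at *
    generalize (N.card : ℤ) = n at *
    generalize ∑ a ∈ P, d a = x at *
    generalize ∑ a ∈ N, d a = y at *
    rw [← hpn] at hi ⊢
    rcases le_total p i with h | h
    · have : i ≤ x := by linarith
      nlinarith [mul_nonneg hn0 (sub_nonneg.2 this), mul_nonneg hp0 (neg_nonneg.2 hB), mul_nonneg hi0 (sub_nonneg.2 h)]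
    · have hy : p - i ≤ -y := by linarith
      nlinarith [mul_nonneg hn0 (sub_nonneg.2 hA), mul_nonneg hp0 (sub_nonneg.2 hy), mul_nonneg (sub_nonneg.2 h) (sub_nonneg.2 hi)]
  rw [split]
  linarith

theorem pda_lb (F K n : ℕ) (i ℓ : ℕ) (hi : i < F) (hK : K = ℓ * F + i)
    (A : Fin F → Fin K → Option (Fin n)) (hA : IsPDA F K 1 A) :
    ((F:ℤ) - 1) * K + i * (F - i) ≤ 2 * n := by
  obtain ⟨h1, h2, h3, h4⟩ := hA
  have hr : ∀ k, ∃ r : Fin F, ∀ j, A j k = none ↔ j = r := by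
    intro k
    obtain ⟨r, hr⟩ := Finset.card_eq_one.1 (h1 k)
    refine ⟨r, fun j => ?_⟩
    have := Finset.ext_iff.1 hr j
    simpa using this
  choose r hr using hr
  let c : Fin F → ℕ := fun a => (Finset.univ.filter fun k => r k = a).card
  let T : Fin F → Fin F → Prop := fun a b => c a < c b ∨ (c a = c b ∧ a < b)
  have Tasymm : ∀ a b, T a b → ¬ T b a := by
    intro a b h h'
    simp only [T, Fin.lt_def] at h h'
    omega
  let C : Finset (Fin F × Fin K) := Finset.univ.filter fun p => T p.1 (r p.2)
  have hcard : C.card ≤ n := by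
    have : C.card ≤ (Finset.univ : Finset (Option (Fin n))).card - 1 := by
      rw [← Finset.card_erase_of_mem (Finset.mem_univ none)]
      refine Finset.card_le_card_of_injOn (fun p => A p.1 p.2) ?_ ?_
      · intro p hp
        obtain ⟨t, ht⟩ : ∃ t, A p.1 p.2 = some t := by
          rw [← Option.ne_none_iff_exists']
          intro h
          rw [hr] at h
          simp only [C, Finset.mem_coe, Finset.mem_filter, h] at hp
          exact Tasymm _ _ hp.2 hp.2
        simp [ht]
      · rintro ⟨j₁, k₁⟩ hp ⟨j₂, k₂⟩ hq h
        simp only [C, Finset.mem_coe, Finset.mem_filter, Finset.mem_univ, true_and] at hp hq h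
        obtain ⟨t, ht⟩ : ∃ t, A j₁ k₁ = some t := by
          rw [← Option.ne_none_iff_exists']
          intro h
          rw [hr] at h
          rw [h] at hp
          exact Tasymm _ _ hp hp
        have ht' := h.symm.trans ht
        by_cases hj : j₁ = j₂
        · subst hj
          rw [h2 _ _ _ _ ht ht']
        by_cases hk : k₁ = k₂
        · subst hk
          rw [h3 _ _ _ _ ht ht']
        obtain ⟨u, v⟩ := h4 _ _ _ _ _ hj hk ht ht'
        rw [hr] at u v
        rw [← v] at hp
        rw [← u] at hq
        exact absurd hq (Tasymm _ _ hp)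
    simpa using this
  have hsumc : ∑ a, (c a : ℤ) = K := by
    have := Finset.card_eq_sum_card_fiberwise (s := (Finset.univ : Finset (Fin K)))
      (t := (Finset.univ : Finset (Fin F))) (f := r) (by intro x _; simp)
    simp only [Finset.card_univ, Fintype.card_fin] at this
    conv_rhs => rw [this]
    push_cast
    rfl
  have hC : (C.card : ℤ) = ∑ a, ∑ b, if T a b then (c b : ℤ) else 0 := by
    have e : C.card = ∑ a, ∑ k, if T a (r k) then 1 else 0 := by
      simp only [C, Finset.card_filter]
      rw [← Finset.univ_product_univ, Finset.sum_product]
    rw [e]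
    push_cast
    refine Finset.sum_congr rfl fun a _ => ?_
    rw [← Finset.sum_fiberwise (Finset.univ) r]
    refine Finset.sum_congr rfl fun b _ => ?_
    rw [Finset.sum_congr rfl (g := fun _ => if T a b then (1:ℤ) else 0)]
    · simp [c]
    · intro x hx
      simp only [Finset.mem_filter] at hx
      rw [hx.2]
  have hC2 : (4 * C.card : ℤ) = ∑ a, ∑ b, ((c a : ℤ) + c b + |(c a:ℤ) - c b| - if a = b then 2 * (c a : ℤ) else 0) := by
    have e : (4 * C.card : ℤ) = 2 * (C.card + C.card) := by ring
    rw [e]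
    conv_lhs => 
      rw [hC]
      arg 2
      arg 2
      rw [Finset.sum_comm]
    rw [← Finset.sum_add_distrib, Finset.mul_sum]
    refine Finset.sum_congr rfl fun a _ => ?_
    rw [← Finset.sum_add_distrib, Finset.mul_sum]
    refine Finset.sum_congr rfl fun b _ => ?_
    by_cases hab : a = b
    · subst hab
      simp [T]
      ring
    · have hab' : (a:ℕ) ≠ b := fun h => hab (Fin.ext h)
      simp only [T, Fin.lt_def, hab, if_false]
      rcases abs_cases ((c a:ℤ) - c b) with h | h <;> split_ifs <;> omega
  have hs : ∑ a, ((c a : ℤ) - ℓ) = i := by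
    rw [Finset.sum_sub_distrib, hsumc, hK]
    simp
    ring
  have hl := abs_sum_lb F (fun a => (c a : ℤ) - ℓ) i (by positivity) (by exact_mod_cast hi.le) hs
  simp only [sub_sub_sub_cancel_right] at hl
  simp only [Finset.sum_sub_distrib, Finset.sum_add_distrib, Finset.sum_ite_eq, Finset.mem_univ,
    if_true, ← Finset.mul_sum, hsumc, Finset.sum_const, Finset.card_univ, Fintype.card_fin,
    nsmul_eq_mul] at hC2
  have : (C.card : ℤ) ≤ n := by exact_mod_cast hcard
  linarith

theorem stmt_14 (F K ℓ i : ℕ) (hF : 2 ≤ F) (hK : 1 ≤ K) (hi : i < F)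
    (hKeq : K = ℓ * F + i) :
    sPDA F K 1 = ℓ * (F * (F - 1) / 2) + i * (i - 1) / 2 + i * (F - i) := by
  have hub := pda_ub F K hF
  have hsum := pda_sum F i ℓ hi
  rw [← hKeq] at hsum
  rw [hsum] at hub
  apply le_antisymm
  · exact Nat.sInf_le hub
  · refine le_csInf ⟨_, hub⟩ ?_
    rintro n ⟨A, hA⟩
    have h := pda_lb F K n i ℓ hi hKeq A hA
    have h1 : 2 * (F * (F - 1) / 2) = F * (F - 1) :=
      Nat.mul_div_cancel' (Nat.even_mul_pred_self F).two_dvd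
    have h2 : 2 * (i * (i - 1) / 2) = i * (i - 1) :=
      Nat.mul_div_cancel' (Nat.even_mul_pred_self i).two_dvd
    have h3 : ((i * (i - 1) : ℕ) : ℤ) = i * (i - 1) := by
      rcases i with _ | i <;> simp
    have h4 : ((i * (F - i) : ℕ) : ℤ) = i * (F - i) := by
      push_cast [Nat.cast_sub hi.le]; ring
    have h5 : ((F * (F - 1) : ℕ) : ℤ) = F * (F - 1) := by
      push_cast [Nat.cast_sub (show 1 ≤ F by omega)]; ring
    generalize F * (F - 1) / 2 = x at *
    generalize i * (i - 1) / 2 = y at *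
    rw [← h1] at h5
    rw [← h2] at h3
    zify
    rw [← Nat.cast_mul i (F - i), h4]
    rw [hKeq] at h
    push_cast at h h3 h5
    nlinarith [h, h3, congrArg (fun z => (ℓ:ℤ) * z) h5]
end

section
/- If in an S-PDA with parameters (F, K, Z) some element of S appears in exactly Z + 1 cells, then |S| ≥ (F − Z − 1)(Z + 1) + 1. -/
open scoped Classical

theorem stmt_15 {S : Type} [Fintype S] (F K Z : ℕ) (A : Fin F → Fin K → Option S)
    (h : IsPDA F K Z A) (t : S)
    (ht : (Finset.univ.filter fun p : Fin F × Fin K => A p.1 p.2 = some t).card = Z + 1) :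
    (F - Z - 1) * (Z + 1) + 1 ≤ Fintype.card S := by
  obtain ⟨h1, h2, h3, h4⟩ := h
  set T := (Finset.univ.filter fun p : Fin F × Fin K => A p.1 p.2 = some t) with hT
  have memT : ∀ p, p ∈ T ↔ A p.1 p.2 = some t := by intro p; simp [hT]
  have hR : (T.image Prod.fst).card = Z + 1 := by
    rw [← ht]
    apply Finset.card_image_of_injOn
    rintro ⟨j, k⟩ hp ⟨j', k'⟩ hq hjj
    have hp' := (memT _).1 hp
    have hq' := (memT _).1 hq
    simp only at hjj hp' hq'
    subst hjj
    rw [h2 _ _ _ _ hp' hq']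
  have hC : (T.image Prod.snd).card = Z + 1 := by
    rw [← ht]
    apply Finset.card_image_of_injOn
    rintro ⟨j, k⟩ hp ⟨j', k'⟩ hq hkk
    have hp' := (memT _).1 hp
    have hq' := (memT _).1 hq
    simp only at hkk hp' hq'
    subst hkk
    rw [h3 _ _ _ _ hp' hq']
  set R := T.image Prod.fst with hRdef
  set C := T.image Prod.snd with hCdef
  have hfull : ∀ j k, j ∉ R → k ∈ C → A j k ≠ none ∧ A j k ≠ some t := by
    intro j k hj hk
    refine ⟨fun hn => hj ?_, fun hs => hj ?_⟩
    · obtain ⟨⟨i, k'⟩, hp, hkk⟩ := Finset.mem_image.1 hk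
      simp only at hkk
      subst hkk
      have hik : A i k' = some t := (memT _).1 hp
      have hiR : i ∈ R := Finset.mem_image.2 ⟨_, hp, rfl⟩
      have hsub : R.erase i ⊆ Finset.univ.filter fun j : Fin F => A j k' = none := by
        intro l hl
        obtain ⟨hli, hlR⟩ := Finset.mem_erase.1 hl
        obtain ⟨⟨l', m⟩, hq, hll⟩ := Finset.mem_image.1 hlR
        simp only at hll
        subst hll
        have hlm : A l' m = some t := (memT _).1 hq
        have hmk : m ≠ k' := by
          rintro rfl
          exact hli (h3 _ _ _ _ hlm hik)
        simp only [Finset.mem_filter, Finset.mem_univ, true_and]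
        exact (h4 _ _ _ _ _ hli hmk hlm hik).1
      have heq := Finset.eq_of_subset_of_card_le hsub (by
        rw [Finset.card_erase_of_mem hiR, hR]
        exact (h1 k').le)
      have : j ∈ R.erase i := by
        rw [heq]
        simpa using hn
      exact Finset.mem_of_mem_erase this
    · exact Finset.mem_image.2 ⟨(j, k), (memT _).2 hs, rfl⟩
  have key : (Rᶜ ×ˢ C).card ≤ ((Finset.univ.erase t).image (some : S → Option S)).card := by
    apply Finset.card_le_card_of_injOn (fun p => A p.1 p.2)
    · rintro ⟨j, k⟩ hp
      have hp := Finset.mem_product.1 hp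
      simp only [Finset.mem_compl] at hp
      obtain ⟨ha, hb⟩ := hfull j k hp.1 hp.2
      obtain ⟨s, hs⟩ := Option.ne_none_iff_exists'.1 ha
      apply Finset.mem_coe.2
      refine Finset.mem_image.2 ⟨s, ?_, hs.symm⟩
      refine Finset.mem_erase.2 ⟨?_, Finset.mem_univ _⟩
      rintro rfl
      exact hb hs
    · rintro ⟨j, k⟩ hp ⟨j', k'⟩ hq hE
      have hp := Finset.mem_product.1 hp
      have hq := Finset.mem_product.1 hq
      simp only [Finset.mem_compl] at hp hq hE
      obtain ⟨s, hs⟩ := Option.ne_none_iff_exists'.1 (hfull j k hp.1 hp.2).1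
      have hs' : A j' k' = some s := hE ▸ hs
      by_cases hjj : j = j'
      · subst hjj
        rw [h2 _ _ _ _ hs hs']
      · by_cases hkk : k = k'
        · subst hkk
          exact absurd (h3 _ _ _ _ hs hs') hjj
        · exact absurd (h4 _ _ _ _ _ hjj hkk hs hs').1 (hfull j k' hp.1 hq.2).1
  rw [Finset.card_product, Finset.card_compl, hR, hC, Fintype.card_fin,
    Finset.card_image_of_injective _ (Option.some_injective S),
    Finset.card_erase_of_mem (Finset.mem_univ _), Finset.card_univ] at key
  have hpos : 0 < Fintype.card S := Fintype.card_pos_iff.2 ⟨t⟩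
  rw [Nat.sub_sub]
  omega
end

section
/- For every positive integer K, s(4, K, 2) = ⌈2K/3⌉ if K ≡ 0, 2 or 5 (mod 6), and s(4, K, 2) = ⌈2K/3⌉ + 1 otherwise. -/
open scoped Classical

def QQ {K n : ℕ} (A : Fin 4 → Fin K → Option (Fin n)) (t : Fin n) (a b : Fin 4) : Prop :=
  a ≠ b ∧ ∃ k, A a k = some t ∧ A b k ≠ none

def StarAt {K n : ℕ} (A : Fin 4 → Fin K → Option (Fin n)) (t : Fin n) (d : Fin 4) : Prop :=
  ∀ a, a ≠ d → QQ A t a d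

def NonStar {K n : ℕ} (A : Fin 4 → Fin K → Option (Fin n)) (t : Fin n) : Prop :=
  ∀ d, ¬ StarAt A t d

lemma col_aux (p : Fin 4 → Bool)
    (h : (Finset.univ.filter fun j : Fin 4 => p j = false).card = 2) :
    (∀ a b c, a ≠ b → a ≠ c → p a = true → p b = true → p c = true → b = c) ∧
    ((if p 0 ∧ p 1 then 1 else 0) + (if p 0 ∧ p 2 then 1 else 0) + (if p 0 ∧ p 3 then 1 else 0)
     + (if p 1 ∧ p 2 then 1 else 0) + (if p 1 ∧ p 3 then 1 else 0)
     + (if p 2 ∧ p 3 then 1 else 0) = 1) := by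
  revert p; decide

lemma col_aux' {K n : ℕ} {A : Fin 4 → Fin K → Option (Fin n)} (hA : IsPDA 4 K 2 A) (k : Fin K) :
    (Finset.univ.filter fun j : Fin 4 => (A j k).isSome = false).card = 2 := by
  have := hA.1 k
  rw [← this]
  congr 1
  ext j
  simp

lemma QQ_row {K n : ℕ} {A : Fin 4 → Fin K → Option (Fin n)} (hA : IsPDA 4 K 2 A) {t a b c}
    (h1 : QQ A t a b) (h2 : QQ A t a c) : b = c := by
  obtain ⟨hab, k, hk, hb⟩ := h1
  obtain ⟨hac, k', hk', hc⟩ := h2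
  obtain rfl := hA.2.1 a k k' t hk hk'
  refine (col_aux (fun j => (A j k).isSome) (col_aux' hA k)).1 a b c hab hac ?_ ?_ ?_
  · simp [hk]
  · simpa [Option.isSome_iff_ne_none] using hb
  · simpa [Option.isSome_iff_ne_none] using hc

lemma QQ_anti {K n : ℕ} {A : Fin 4 → Fin K → Option (Fin n)} (hA : IsPDA 4 K 2 A) {t a b c}
    (h1 : QQ A t a b) (h2 : QQ A t b c) : False := by
  obtain ⟨hab, k, hk, hb⟩ := h1
  obtain ⟨hac, k', hk', hc⟩ := h2
  by_cases h : k = k'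
  · subst h
    exact hab (hA.2.2.1 a b k t hk hk')
  · exact hb (hA.2.2.2 a b k k' t hab h hk hk').2

lemma exists_ne4 : ∀ a b : Fin 4, ∃ c, c ≠ a ∧ c ≠ b := by decide

lemma star_QQ {K n : ℕ} {A : Fin 4 → Fin K → Option (Fin n)} (hA : IsPDA 4 K 2 A) {t a b d}
    (h : StarAt A t d) (hq : QQ A t a b) : b = d := by
  by_cases had : a = d
  · subst had
    exact (QQ_anti hA hq (h b hq.1.symm)).elim
  · exact QQ_row hA hq (h a had)

lemma card_QQ {K n : ℕ} {A : Fin 4 → Fin K → Option (Fin n)} (hA : IsPDA 4 K 2 A) {a b : Fin 4}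
    (hab : a ≠ b) :
    (Finset.univ.filter fun t => QQ A t a b).card =
      (Finset.univ.filter fun k => (A a k).isSome ∧ (A b k).isSome).card := by
  symm
  refine Finset.card_bij (fun k hk => (A a k).get (by simpa using (Finset.mem_filter.1 hk).2.1))
    ?_ ?_ ?_
  · intro k hk
    have h2 := (Finset.mem_filter.1 hk).2
    simp only [Finset.mem_filter, Finset.mem_univ, true_and]
    exact ⟨hab, k, by simp, Option.isSome_iff_ne_none.1 h2.2⟩
  · intro k hk k' hk' h
    have h1 := (Finset.mem_filter.1 hk).2.1
    have h2 := (Finset.mem_filter.1 hk').2.1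
    refine hA.2.1 a k k' ((A a k).get h1) (by simp) ?_
    rw [h]; simp
  · intro t ht
    obtain ⟨-, k, hk, hb⟩ := (Finset.mem_filter.1 ht).2
    refine ⟨k, ?_, ?_⟩
    · simp only [Finset.mem_filter, Finset.mem_univ, true_and]
      exact ⟨by simp [hk], Option.isSome_iff_ne_none.2 hb⟩
    · simp [hk]

lemma card_split {K n : ℕ} {A : Fin 4 → Fin K → Option (Fin n)} (hA : IsPDA 4 K 2 A) {a b : Fin 4}
    (hab : a ≠ b) :
    (Finset.univ.filter fun t => QQ A t a b).card =
      (Finset.univ.filter fun t => StarAt A t b).card +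
      (Finset.univ.filter fun t => NonStar A t ∧ QQ A t a b).card := by
  rw [← Finset.card_union_of_disjoint]
  · congr 1
    ext t
    simp only [Finset.mem_filter, Finset.mem_univ, true_and, Finset.mem_union]
    constructor
    · intro h
      by_cases hs : NonStar A t
      · exact Or.inr ⟨hs, h⟩
      · left
        simp only [NonStar, not_forall, not_not] at hs
        obtain ⟨d, hd⟩ := hs
        obtain rfl := star_QQ hA hd h
        exact hd
    · rintro (h | h)
      · exact h a hab
      · exact h.2
  · rw [Finset.disjoint_left]
    intro t h1 h2
    simp only [Finset.mem_filter, Finset.mem_univ, true_and] at h1 h2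
    exact h2.1 b h1

lemma star_unique {K n : ℕ} {A : Fin 4 → Fin K → Option (Fin n)} (hA : IsPDA 4 K 2 A) {t c d}
    (h1 : StarAt A t c) (h2 : StarAt A t d) : c = d := by
  obtain ⟨a, ha, -⟩ := exists_ne4 c d
  exact star_QQ hA h2 (h1 a ha)

lemma n_eq {K n : ℕ} {A : Fin 4 → Fin K → Option (Fin n)} (hA : IsPDA 4 K 2 A) :
    n = (∑ d, (Finset.univ.filter fun t => StarAt A t d).card) +
      (Finset.univ.filter fun t => NonStar A t).card := by
  simp only [Finset.card_filter]
  rw [Finset.sum_comm, ← Finset.sum_add_distrib]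
  conv_lhs => rw [← Fintype.card_fin n, ← Finset.card_univ, Finset.card_eq_sum_ones]
  refine Finset.sum_congr rfl fun t _ => ?_
  by_cases hs : NonStar A t
  · have : ∀ d, ¬ StarAt A t d := hs
    simp [hs, this]
  · have hs' := hs
    simp only [NonStar, not_forall, not_not] at hs'
    obtain ⟨d, hd⟩ := hs'
    rw [if_neg hs, Finset.sum_eq_single d]
    · simp [hd]
    · intro c _ hc
      exact if_neg fun h => hc (star_unique hA h hd)
    · simp

lemma K_eq {K n : ℕ} {A : Fin 4 → Fin K → Option (Fin n)} (hA : IsPDA 4 K 2 A)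
    (m : Fin 4 → Fin 4 → ℕ)
    (hm : ∀ a b, m a b = (Finset.univ.filter fun k => (A a k).isSome ∧ (A b k).isSome).card) :
    K = m 0 1 + m 0 2 + m 0 3 + m 1 2 + m 1 3 + m 2 3 := by
  simp only [hm, Finset.card_filter]
  simp only [← Finset.sum_add_distrib]
  conv_lhs => rw [← Fintype.card_fin K, ← Finset.card_univ, Finset.card_eq_sum_ones]
  refine Finset.sum_congr rfl fun k _ => ?_
  exact (by simpa using ((col_aux (fun j => (A j k).isSome) (col_aux' hA k)).2).symm)

set_option maxRecDepth 100000 in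
lemma fin_aux : ∀ g0 g1 g2 g3 : Option (Fin 4),
    let g : Fin 4 → Option (Fin 4) := ![g0, g1, g2, g3]
    (∀ a b, g a = some b → g b = none) → (∀ d, ∃ a, a ≠ d ∧ g a ≠ some d) →
    (if g0 = none then 0 else 1) + (if g1 = none then 0 else 1) + (if g2 = none then 0 else 1) +
    (if g3 = none then 0 else 1) ≤ 2 := by
  decide

noncomputable def gg {K n : ℕ} (A : Fin 4 → Fin K → Option (Fin n)) (t : Fin n) (a : Fin 4) :
    Option (Fin 4) :=
  if h : ∃ b, QQ A t a b then some h.choose else none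

lemma gg_iff {K n : ℕ} {A : Fin 4 → Fin K → Option (Fin n)} (hA : IsPDA 4 K 2 A) (t a b) :
    gg A t a = some b ↔ QQ A t a b := by
  unfold gg
  split_ifs with h
  · constructor
    · intro e
      have := h.choose_spec
      simp only [Option.some.injEq] at e
      rwa [e] at this
    · intro e
      exact congrArg some (QQ_row hA h.choose_spec e)
  · simp only [reduceCtorEq, false_iff]
    exact fun e => h ⟨b, e⟩

lemma gg_sum (o : Option (Fin 4)) :
    ∑ b, (if o = some b then 1 else 0) = if o = none then 0 else 1 := by
  cases o with
  | none => simp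
  | some v => simp

lemma nonstar_le {K n : ℕ} {A : Fin 4 → Fin K → Option (Fin n)} (hA : IsPDA 4 K 2 A) {t}
    (h : NonStar A t) :
    ∑ a, ∑ b, (if QQ A t a b then 1 else 0) ≤ 2 := by
  simp only [← gg_iff hA, gg_sum]
  rw [Fin.sum_univ_four]
  have e : ∀ a, (![gg A t 0, gg A t 1, gg A t 2, gg A t 3] : Fin 4 → _) a = gg A t a := by
    intro a; fin_cases a <;> rfl
  have := fin_aux (gg A t 0) (gg A t 1) (gg A t 2) (gg A t 3)
  simp only [e] at this
  refine this ?_ ?_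
  · intro a b hab
    rw [Option.eq_none_iff_forall_ne_some]
    intro c hc
    exact QQ_anti hA ((gg_iff hA _ _ _).1 hab) ((gg_iff hA _ _ _).1 hc)
  · intro d
    by_contra! hc
    exact h d fun a ha => (gg_iff hA _ _ _).1 (hc a ha)

lemma y_sum {K n : ℕ} {A : Fin 4 → Fin K → Option (Fin n)} (hA : IsPDA 4 K 2 A) :
    ∑ a, ∑ b, (Finset.univ.filter fun t => NonStar A t ∧ QQ A t a b).card ≤
      2 * (Finset.univ.filter fun t => NonStar A t).card := by
  have : ∀ a b, (Finset.univ.filter fun t => NonStar A t ∧ QQ A t a b).card =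
      ∑ t ∈ Finset.univ.filter (fun t => NonStar A t), if QQ A t a b then 1 else 0 := by
    intro a b
    rw [← Finset.filter_filter, Finset.card_filter]
  simp only [this]
  have h2 : ∀ a, ∑ b, (∑ t ∈ Finset.univ.filter (fun t => NonStar A t),
      if QQ A t a b then 1 else 0) = ∑ t ∈ Finset.univ.filter (fun t => NonStar A t),
      ∑ b, if QQ A t a b then 1 else 0 := fun a => Finset.sum_comm
  simp only [h2]
  rw [Finset.sum_comm, mul_comm, ← smul_eq_mul]
  refine Finset.sum_le_card_nsmul _ _ _ fun t ht => ?_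
  exact nonstar_le hA (Finset.mem_filter.1 ht).2

lemma y_pair {K n : ℕ} {A : Fin 4 → Fin K → Option (Fin n)} (hA : IsPDA 4 K 2 A) (a b : Fin 4) :
    (Finset.univ.filter fun t => NonStar A t ∧ QQ A t a b).card +
    (Finset.univ.filter fun t => NonStar A t ∧ QQ A t b a).card ≤
      (Finset.univ.filter fun t => NonStar A t).card := by
  rw [← Finset.card_union_of_disjoint]
  · apply Finset.card_le_card
    intro t
    simp only [Finset.mem_filter, Finset.mem_univ, true_and, Finset.mem_union]
    tauto
  · rw [Finset.disjoint_left]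
    intro t h1 h2
    simp only [Finset.mem_filter, Finset.mem_univ, true_and] at h1 h2
    exact QQ_anti hA h1.2 h2.2

lemma arith (K n ν : ℕ) (x : Fin 4 → ℕ) (y : Fin 4 → Fin 4 → ℕ) (m01 m02 m03 m12 m13 m23 : ℕ)
    (hn : n = x 0 + x 1 + x 2 + x 3 + ν)
    (hK : K = m01 + m02 + m03 + m12 + m13 + m23)
    (hy : y 0 0 + y 0 1 + y 0 2 + y 0 3 + (y 1 0 + y 1 1 + y 1 2 + y 1 3) +
      (y 2 0 + y 2 1 + y 2 2 + y 2 3) + (y 3 0 + y 3 1 + y 3 2 + y 3 3) ≤ 2 * ν)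
    (c01 : m01 = x 1 + y 0 1) (c02 : m02 = x 2 + y 0 2) (c03 : m03 = x 3 + y 0 3)
    (c12 : m12 = x 2 + y 1 2) (c13 : m13 = x 3 + y 1 3) (c23 : m23 = x 3 + y 2 3)
    (c10 : m01 = x 0 + y 1 0) (c20 : m02 = x 0 + y 2 0) (c30 : m03 = x 0 + y 3 0)
    (c21 : m12 = x 1 + y 2 1) (c31 : m13 = x 1 + y 3 1) (c32 : m23 = x 2 + y 3 2)
    (p01 : y 0 1 + y 1 0 ≤ ν) (p02 : y 0 2 + y 2 0 ≤ ν) (p03 : y 0 3 + y 3 0 ≤ ν)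
    (p12 : y 1 2 + y 2 1 ≤ ν) (p13 : y 1 3 + y 3 1 ≤ ν) (p23 : y 2 3 + y 3 2 ≤ ν)
    (h : 3 * n < 2 * K + 2) : ∃ z, K = 6 * z ∧ n = 4 * z := by
  have hν : ν ≤ 1 := by
    have : ν < 2 := by linarith
    omega
  have e01 : x 0 = x 1 := by
    rcases lt_trichotomy (x 0) (x 1) with hl | hl | hl
    · exfalso; have := Nat.succ_le_of_lt hl; linarith
    · exact hl
    · exfalso; have := Nat.succ_le_of_lt hl; linarith
  have e02 : x 0 = x 2 := by
    rcases lt_trichotomy (x 0) (x 2) with hl | hl | hl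
    · exfalso; have := Nat.succ_le_of_lt hl; linarith
    · exact hl
    · exfalso; have := Nat.succ_le_of_lt hl; linarith
  have e03 : x 0 = x 3 := by
    rcases lt_trichotomy (x 0) (x 3) with hl | hl | hl
    · exfalso; have := Nat.succ_le_of_lt hl; linarith
    · exact hl
    · exfalso; have := Nat.succ_le_of_lt hl; linarith
  have y01 : y 0 1 = 0 := by omega
  have y02 : y 0 2 = 0 := by omega
  have y03 : y 0 3 = 0 := by omega
  have y12 : y 1 2 = 0 := by omega
  have y13 : y 1 3 = 0 := by omega
  have y23 : y 2 3 = 0 := by omega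
  rw [y01] at c01
  rw [y02] at c02
  rw [y03] at c03
  rw [y12] at c12
  rw [y13] at c13
  rw [y23] at c23
  clear hy c10 c20 c30 c21 c31 c32 p01 p02 p03 p12 p13 p23 y01 y02 y03 y12 y13 y23
  refine ⟨x 0, ?_, ?_⟩ <;> omega

lemma lower {K n : ℕ} {A : Fin 4 → Fin K → Option (Fin n)} (hA : IsPDA 4 K 2 A) :
    2 * K + 2 ≤ 3 * n ∨ ∃ x, K = 6 * x ∧ n = 4 * x := by
  have hn := n_eq hA
  have hK := K_eq hA _ (fun a b => rfl)
  have hy := y_sum hA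
  have hp := y_pair hA
  have hc : ∀ a b : Fin 4, a ≠ b → _ := fun a b h => (card_QQ hA h).symm.trans (card_split hA h)
  generalize (Finset.univ.filter fun t => NonStar A t).card = ν at *
  generalize hx : (fun d => (Finset.univ.filter fun t => StarAt A t d).card) = x at *
  generalize hyy : (fun a b => (Finset.univ.filter fun t => NonStar A t ∧ QQ A t a b).card) = y at *
  generalize hm : (fun a b => (Finset.univ.filter fun k => (A a k).isSome ∧ (A b k).isSome).card) = m at *
  have hx' := fun d => congrFun hx d
  have hy' := fun a b => congrFun (congrFun hyy a) b
  have hm' := fun a b => congrFun (congrFun hm a) b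
  simp only [hx', hy', hm'] at hn hK hy hp hc
  have hs : ∀ a b, m a b = m b a := by
    intro a b
    rw [← hm', ← hm']
    congr 1; ext k; simp [and_comm]
  simp only [Fin.sum_univ_four] at hn hy
  have c01 := hc 0 1 (by decide)
  have c02 := hc 0 2 (by decide)
  have c03 := hc 0 3 (by decide)
  have c12 := hc 1 2 (by decide)
  have c13 := hc 1 3 (by decide)
  have c23 := hc 2 3 (by decide)
  have c10 := hc 1 0 (by decide)
  have c20 := hc 2 0 (by decide)
  have c30 := hc 3 0 (by decide)
  have c21 := hc 2 1 (by decide)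
  have c31 := hc 3 1 (by decide)
  have c32 := hc 3 2 (by decide)
  rw [hs 1 0] at c10
  rw [hs 2 0] at c20
  rw [hs 3 0] at c30
  rw [hs 2 1] at c21
  rw [hs 3 1] at c31
  rw [hs 3 2] at c32
  have p01 := hp 0 1
  have p02 := hp 0 2
  have p03 := hp 0 3
  have p12 := hp 1 2
  have p13 := hp 1 3
  have p23 := hp 2 3
  clear hc hp hs hm hyy hx hx' hy' hm' hA
  by_cases h : 2 * K + 2 ≤ 3 * n
  · exact Or.inl h
  right
  push Not at h
  exact arith K n ν x y _ _ _ _ _ _ hn hK hy c01 c02 c03 c12 c13 c23 c10 c20 c30 c21 c31 c32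
    p01 p02 p03 p12 p13 p23 h

lemma cond_of_bool {K n : ℕ} (A : Fin 4 → Fin K → Option (Fin n))
    (h1 : ∀ k, (Finset.univ.filter fun j : Fin 4 => (A j k).isNone = true).card = 2)
    (h2 : ∀ (j₁ j₂ : Fin 4) (k₁ k₂ : Fin K), (A j₁ k₁).isNone = true ∨ (A j₁ k₁ ≠ A j₂ k₂) ∨
      (j₁ = j₂ ∧ k₁ = k₂) ∨
      (j₁ ≠ j₂ ∧ k₁ ≠ k₂ ∧ (A j₁ k₂).isNone = true ∧ (A j₂ k₁).isNone = true)) :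
    IsPDA 4 K 2 A := by
  refine ⟨fun k => ?_, ?_, ?_, ?_⟩
  · rw [← h1 k]
    congr 1
    ext j
    simp
  · intro j k1 k2 t e1 e2
    have := h2 j j k1 k2
    simp_all
  · intro j1 j2 k t e1 e2
    have := h2 j1 j2 k k
    simp_all
  · intro j1 j2 k1 k2 t hj hk e1 e2
    have := h2 j1 j2 k1 k2
    simp_all

lemma base1 : ∃ A : Fin 4 → Fin 1 → Option (Fin 2), IsPDA 4 1 2 A :=
  ⟨![![some 0], ![some 1], ![none], ![none]], cond_of_bool _ (by decide) (by decide)⟩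

lemma base2 : ∃ A : Fin 4 → Fin 2 → Option (Fin 2), IsPDA 4 2 2 A :=
  ⟨![![some 0, none], ![some 1, none], ![none, some 0], ![none, some 1]],
    cond_of_bool _ (by decide) (by decide)⟩

lemma base3 : ∃ A : Fin 4 → Fin 3 → Option (Fin 3), IsPDA 4 3 2 A :=
  ⟨![![some 0, none, some 1], ![some 2, some 1, none], ![none, some 0, some 2],
    ![none, none, none]],
    cond_of_bool _ (by decide) (by decide)⟩

set_option maxRecDepth 100000 in
lemma base6 : ∃ A : Fin 4 → Fin 6 → Option (Fin 4), IsPDA 4 6 2 A :=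
  ⟨![![some 1, some 2, some 3, none, none, none],
     ![some 0, none, none, some 2, some 3, none],
     ![none, some 0, none, some 1, none, some 3],
     ![none, none, some 0, none, some 1, some 2]],
    cond_of_bool _ (by decide) (by decide)⟩

lemma restrict {K K' n : ℕ} (h : K' ≤ K) (H : ∃ A : Fin 4 → Fin K → Option (Fin n), IsPDA 4 K 2 A) :
    ∃ A : Fin 4 → Fin K' → Option (Fin n), IsPDA 4 K' 2 A := by
  obtain ⟨A, h1, h2, h3, h4⟩ := H
  refine ⟨fun j k => A j (Fin.castLE h k), fun k => h1 _, ?_, ?_, ?_⟩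
  · intro j k1 k2 t e1 e2
    exact Fin.castLE_injective h (h2 j _ _ t e1 e2)
  · intro j1 j2 k t e1 e2
    exact h3 j1 j2 _ t e1 e2
  · intro j1 j2 k1 k2 t hj hk e1 e2
    exact h4 j1 j2 _ _ t hj (fun e => hk (Fin.castLE_injective h e)) e1 e2

lemma glue {K K' n n' : ℕ} (H : ∃ A : Fin 4 → Fin K → Option (Fin n), IsPDA 4 K 2 A)
    (H' : ∃ A : Fin 4 → Fin K' → Option (Fin n'), IsPDA 4 K' 2 A) :
    ∃ A : Fin 4 → Fin (K + K') → Option (Fin (n + n')), IsPDA 4 (K + K') 2 A := by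
  obtain ⟨A, h1, h2, h3, h4⟩ := H
  obtain ⟨B, g1, g2, g3, g4⟩ := H'
  let C : Fin 4 → Fin (K + K') → Option (Fin (n + n')) := fun j k =>
    Fin.addCases (motive := fun _ => Option (Fin (n + n')))
      (fun k => (A j k).map (Fin.castAdd n')) (fun k => (B j k).map (Fin.natAdd n)) k
  have cl : ∀ j k, C j (Fin.castAdd K' k) = (A j k).map (Fin.castAdd n') := by
    intro j k; simp [C]
  have cr : ∀ j k, C j (Fin.natAdd K k) = (B j k).map (Fin.natAdd n) := by
    intro j k; simp [C]
  have ll : ∀ j k t, C j (Fin.castAdd K' k) = some (Fin.castAdd n' t) ↔ A j k = some t := by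
    intro j k t
    rw [cl]
    simp
  have rr : ∀ j k t, C j (Fin.natAdd K k) = some (Fin.natAdd n t) ↔ B j k = some t := by
    intro j k t
    rw [cr]
    simp
  have lr : ∀ j k t, C j (Fin.castAdd K' k) ≠ some (Fin.natAdd n t) := by
    intro j k t
    rw [cl]
    simp only [ne_eq, Option.map_eq_some_iff, not_exists, not_and]
    intro a _ e
    have := congrArg Fin.val e
    simp at this
    omega
  have rl : ∀ j k t, C j (Fin.natAdd K k) ≠ some (Fin.castAdd n' t) := by
    intro j k t
    rw [cr]
    simp only [ne_eq, Option.map_eq_some_iff, not_exists, not_and]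
    intro a _ e
    have := congrArg Fin.val e
    simp at this
    omega
  have nl : ∀ j k, C j (Fin.castAdd K' k) = none ↔ A j k = none := by
    intro j k; rw [cl]; simp
  have nr : ∀ j k, C j (Fin.natAdd K k) = none ↔ B j k = none := by
    intro j k; rw [cr]; simp
  refine ⟨C, ?_, ?_, ?_, ?_⟩
  · intro k
    refine Fin.addCases (fun k => ?_) (fun k => ?_) k
    · simp only [nl]; exact h1 k
    · simp only [nr]; exact g1 k
  · intro j k1 k2 t
    refine Fin.addCases (fun t => ?_) (fun t => ?_) t <;>
    refine Fin.addCases (fun k => ?_) (fun k => ?_) k1 <;>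
    refine Fin.addCases (fun k' => ?_) (fun k' => ?_) k2 <;> intro e1 e2 <;>
    first
    | exact absurd e1 (lr _ _ _)
    | exact absurd e1 (rl _ _ _)
    | exact absurd e2 (lr _ _ _)
    | exact absurd e2 (rl _ _ _)
    | exact congrArg _ (h2 j _ _ t ((ll _ _ _).1 e1) ((ll _ _ _).1 e2))
    | exact congrArg _ (g2 j _ _ t ((rr _ _ _).1 e1) ((rr _ _ _).1 e2))
  · intro j1 j2 k t
    refine Fin.addCases (fun t => ?_) (fun t => ?_) t <;>
    refine Fin.addCases (fun k => ?_) (fun k => ?_) k <;> intro e1 e2 <;>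
    first
    | exact absurd e1 (lr _ _ _)
    | exact absurd e1 (rl _ _ _)
    | exact (h3 j1 j2 _ t ((ll _ _ _).1 e1) ((ll _ _ _).1 e2))
    | exact (g3 j1 j2 _ t ((rr _ _ _).1 e1) ((rr _ _ _).1 e2))
  · intro j1 j2 k1 k2 t hj
    refine Fin.addCases (fun t => ?_) (fun t => ?_) t <;>
    refine Fin.addCases (fun k => ?_) (fun k => ?_) k1 <;>
    refine Fin.addCases (fun k' => ?_) (fun k' => ?_) k2 <;> intro hk e1 e2 <;>
    first
    | exact absurd e1 (lr _ _ _)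
    | exact absurd e1 (rl _ _ _)
    | exact absurd e2 (lr _ _ _)
    | exact absurd e2 (rl _ _ _)
    | (rw [nl, nl]
       exact h4 j1 j2 _ _ t hj (fun e => hk (congrArg _ e)) ((ll _ _ _).1 e1) ((ll _ _ _).1 e2))
    | (rw [nr, nr]
       exact g4 j1 j2 _ _ t hj (fun e => hk (congrArg _ e)) ((rr _ _ _).1 e1) ((rr _ _ _).1 e2))

lemma many {r s : ℕ} (H : ∃ A : Fin 4 → Fin r → Option (Fin s), IsPDA 4 r 2 A) (q : ℕ) :
    ∃ A : Fin 4 → Fin (r + 6 * q) → Option (Fin (s + 4 * q)), IsPDA 4 (r + 6 * q) 2 A := by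
  induction q with
  | zero => exact H
  | succ q ih => 
    have := glue ih base6
    exact this

lemma base0 : ∃ A : Fin 4 → Fin 0 → Option (Fin 0), IsPDA 4 0 2 A :=
  ⟨fun _ k => k.elim0, fun k => k.elim0, fun _ k => k.elim0, fun _ _ k => k.elim0,
    fun _ _ k => k.elim0⟩

lemma ceil_aux (K : ℕ) : ⌈(2 * K : ℚ) / 3⌉₊ = (2 * K + 2) / 3 := by
  apply le_antisymm
  · rw [Nat.ceil_le, div_le_iff₀ (by norm_num)]
    have : 2 * K ≤ (2 * K + 2) / 3 * 3 := by omega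
    exact_mod_cast this
  · have h := Nat.le_ceil ((2 * K : ℚ) / 3)
    rw [div_le_iff₀ (by norm_num)] at h
    have : 2 * K ≤ ⌈(2 * K : ℚ) / 3⌉₊ * 3 := by exact_mod_cast h
    omega

lemma sPDA_eq (K N : ℕ) (h1 : ∃ A : Fin 4 → Fin K → Option (Fin N), IsPDA 4 K 2 A)
    (h2 : ∀ n, (2 * K + 2 ≤ 3 * n ∨ ∃ x, K = 6 * x ∧ n = 4 * x) → N ≤ n) : sPDA 4 K 2 = N := by
  apply le_antisymm
  · exact Nat.sInf_le h1
  · refine le_csInf ⟨N, h1⟩ ?_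
    rintro n ⟨A, hA⟩
    exact h2 n (lower hA)

theorem stmt_16 (K : ℕ) (hK : 0 < K) :
    sPDA 4 K 2 =
      if K % 6 = 0 ∨ K % 6 = 2 ∨ K % 6 = 5
        then ⌈(2 * K : ℚ) / 3⌉₊
        else ⌈(2 * K : ℚ) / 3⌉₊ + 1 := by
  rw [ceil_aux]
  have hr : K % 6 < 6 := Nat.mod_lt _ (by norm_num)
  obtain ⟨q, r, rfl, hr⟩ : ∃ q r, K = r + 6 * q ∧ r < 6 := ⟨K / 6, K % 6, by omega, hr⟩
  have key : ∀ N s, (∃ A : Fin 4 → Fin r → Option (Fin s), IsPDA 4 r 2 A) → s + 4 * q = N →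
      (∀ n, (2 * (r + 6 * q) + 2 ≤ 3 * n ∨ ∃ x, r + 6 * q = 6 * x ∧ n = 4 * x) → N ≤ n) →
      sPDA 4 (r + 6 * q) 2 = N := by
    rintro N s h rfl h2
    exact sPDA_eq _ _ (many h q) h2
  interval_cases r
  · exact key _ 0 base0 (by split_ifs <;> omega) (by rintro n (h | ⟨x, h, h'⟩) <;> split_ifs <;> omega)
  · exact key _ 2 base1 (by split_ifs <;> omega) (by rintro n (h | ⟨x, h, h'⟩) <;> split_ifs <;> omega)
  · exact key _ 2 base2 (by split_ifs <;> omega) (by rintro n (h | ⟨x, h, h'⟩) <;> split_ifs <;> omega)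
  · exact key _ 3 base3 (by split_ifs <;> omega) (by rintro n (h | ⟨x, h, h'⟩) <;> split_ifs <;> omega)
  · exact key _ 4 (restrict (by norm_num) base6) (by split_ifs <;> omega) (by rintro n (h | ⟨x, h, h'⟩) <;> split_ifs <;> omega)
  · exact key _ 4 (restrict (by norm_num) base6) (by split_ifs <;> omega) (by rintro n (h | ⟨x, h, h'⟩) <;> split_ifs <;> omega)
end

section
/- For every positive integer K, s(5, K, 3) = ⌈K/2⌉ if K ≡ 0 or 9 (mod 10), and s(5, K, 3) = ⌈K/2⌉ + 1 otherwise. -/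
open scoped Classical

def PEx (K n : ℕ) : Prop := ∃ A : Fin 5 → Fin K → Option (Fin n), IsPDA 5 K 3 A

theorem PEx.mono {K K' n : ℕ} (h : PEx K n) (hk : K' ≤ K) : PEx K' n := by
  obtain ⟨A, h1, h2, h3, h4⟩ := h
  refine ⟨fun j k => A j (Fin.castLE hk k), fun k => h1 _, ?_, ?_, ?_⟩
  · intro j k₁ k₂ t e1 e2
    exact Fin.castLE_injective hk (h2 j _ _ t e1 e2)
  · intro j₁ j₂ k t e1 e2
    exact h3 _ _ _ t e1 e2
  · intro j₁ j₂ k₁ k₂ t hj hk' e1 e2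
    exact h4 _ _ _ _ t hj (fun h => hk' (Fin.castLE_injective hk h)) e1 e2

theorem PEx.add {K K' n n' : ℕ} (h : PEx K n) (h' : PEx K' n') : PEx (K + K') (n + n') := by
  obtain ⟨A, h1, h2, h3, h4⟩ := h
  obtain ⟨B, g1, g2, g3, g4⟩ := h'
  refine ⟨fun j k => Fin.addCases (motive := fun _ => Option (Fin (n + n')))
    (fun k => (A j k).map (Fin.castAdd n')) (fun k => (B j k).map (Fin.natAdd n)) k, ?_, ?_, ?_, ?_⟩
  · intro k
    refine Fin.addCases (fun k => ?_) (fun k => ?_) k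
    · simpa using h1 k
    · simpa using g1 k
  · intro j k₁ k₂ t
    refine Fin.addCases (fun k₁ => ?_) (fun k₁ => ?_) k₁ <;>
    refine Fin.addCases (fun k₂ => ?_) (fun k₂ => ?_) k₂ <;>
    refine Fin.addCases (fun t => ?_) (fun t => ?_) t <;>
    simp [Fin.ext_iff] <;> intros <;> try omega
    · rename_i x hx e y hy e'
      obtain rfl : x = t := Fin.ext e
      obtain rfl : y = x := Fin.ext e'
      exact congrArg Fin.val (h2 _ _ _ _ hx hy)
    · rename_i x hx e y hy e'
      obtain rfl : x = t := Fin.ext e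
      obtain rfl : y = x := Fin.ext e'
      exact congrArg Fin.val (g2 _ _ _ _ hx hy)
  · intro j₁ j₂ k t
    refine Fin.addCases (fun k => ?_) (fun k => ?_) k <;>
    refine Fin.addCases (fun t => ?_) (fun t => ?_) t <;>
    simp [Fin.ext_iff] <;> intros <;> try omega
    · rename_i x hx e y hy e'
      obtain rfl : x = t := Fin.ext e
      obtain rfl : y = x := Fin.ext e'
      exact congrArg Fin.val (h3 _ _ _ _ hx hy)
    · rename_i x hx e y hy e'
      obtain rfl : x = t := Fin.ext e
      obtain rfl : y = x := Fin.ext e'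
      exact congrArg Fin.val (g3 _ _ _ _ hx hy)
  · intro j₁ j₂ k₁ k₂ t hj
    refine Fin.addCases (fun k₁ => ?_) (fun k₁ => ?_) k₁ <;>
    refine Fin.addCases (fun k₂ => ?_) (fun k₂ => ?_) k₂ <;>
    refine Fin.addCases (fun t => ?_) (fun t => ?_) t <;>
    simp [Fin.ext_iff] <;> intros <;> try omega
    · rename_i hk x hx e y hy e'
      obtain rfl : x = t := Fin.ext e
      obtain rfl : y = x := Fin.ext e'
      exact h4 _ _ _ _ _ hj (fun h => hk (congrArg Fin.val h)) hx hy
    · rename_i hk x hx e y hy e'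
      obtain rfl : x = t := Fin.ext e
      obtain rfl : y = x := Fin.ext e'
      exact g4 _ _ _ _ _ hj (fun h => hk (congrArg Fin.val h)) hx hy

theorem PEx.base (K n : ℕ) (u v : Fin K → Fin 5) (p q : Fin K → Fin n)
    (huv : ∀ k, u k ≠ v k) (hpq : ∀ k, p k ≠ q k)
    (hp : ∀ k l, k ≠ l → p k = p l → u k ≠ u l ∧ u k ≠ v l ∧ u l ≠ v k)
    (hq : ∀ k l, k ≠ l → q k = q l → v k ≠ v l ∧ v k ≠ u l ∧ v l ≠ u k)
    (hr : ∀ k l, k ≠ l → p k = q l → u k ≠ v l ∧ u k ≠ u l ∧ v l ≠ v k) :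
    PEx K n := by
  refine ⟨fun j k => if j = u k then some (p k) else if j = v k then some (q k) else none,
    ?_, ?_, ?_, ?_⟩
  · intro k
    have : (Finset.univ.filter fun j : Fin 5 =>
      (if j = u k then some (p k) else if j = v k then some (q k) else none) = none) =
      ((Finset.univ.erase (u k)).erase (v k)) := by
      ext j
      simp only [Finset.mem_filter, Finset.mem_erase, Finset.mem_univ, true_and, and_true]
      split_ifs <;> simp_all
    rw [this, Finset.card_erase_of_mem, Finset.card_erase_of_mem] <;> simp
    exact (huv k).symm
  · intro j k l t
    have := hp k l; have := hq k l; have := hr k l; have := hr l k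
    have := huv k; have := huv l; have := hpq k; have := hpq l
    dsimp only
    grind
  · intro i j k t
    have := huv k; have := hpq k
    dsimp only
    grind
  · intro i j k l t
    have := hp k l; have := hq k l; have := hr k l; have := hr l k
    have := huv k; have := huv l; have := hpq k; have := hpq l
    dsimp only
    grind

theorem PEx.ten : PEx 10 5 :=
  PEx.base 10 5 ![0,0,0,0,1,1,1,2,2,3] ![1,2,3,4,2,3,4,3,4,4]
    ![1,2,3,4,2,3,4,3,4,4] ![0,0,0,0,1,1,1,2,2,3]
    (by decide) (by decide) (by decide) (by decide) (by decide)

theorem PEx.two : PEx 2 2 :=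
  PEx.base 2 2 ![0,2] ![1,3] ![0,0] ![1,1]
    (by decide) (by decide) (by decide) (by decide) (by decide)

theorem PEx.four : PEx 4 3 :=
  PEx.base 4 3 ![0,0,1,3] ![1,2,2,4] ![1,2,2,0] ![0,0,1,1]
    (by decide) (by decide) (by decide) (by decide) (by decide)

theorem PEx.six : PEx 6 4 :=
  PEx.base 6 4 ![0,0,0,1,1,2] ![1,2,3,2,3,3] ![1,2,3,2,3,3] ![0,0,0,1,1,2]
    (by decide) (by decide) (by decide) (by decide) (by decide)

theorem PEx.mul (m : ℕ) : PEx (10 * m) (5 * m) := by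
  induction m with
  | zero =>
    refine ⟨fun _ k => k.elim0, fun k => k.elim0, fun _ k => k.elim0, fun _ _ k => k.elim0,
      fun _ _ k => k.elim0⟩
  | succ m ih => exact ih.add PEx.ten

theorem PEx.upper0 (K : ℕ) (h : K % 10 = 0 ∨ K % 10 = 9) : PEx K ((K + 1) / 2) := by
  have h1 := (PEx.mul ((K + 1) / 10)).mono (K' := K) (by omega)
  have h2 : 5 * ((K + 1) / 10) = (K + 1) / 2 := by omega
  rwa [h2] at h1

theorem PEx.upper1 (K : ℕ) (h : ¬ (K % 10 = 0 ∨ K % 10 = 9)) : PEx K ((K + 1) / 2 + 1) := by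
  have key : ∀ r s : ℕ, PEx r s → K ≤ 10 * (K / 10) + r → 5 * (K / 10) + s = (K + 1) / 2 + 1 →
      PEx K ((K + 1) / 2 + 1) := by
    intro r s h1 h2 h3
    have := ((PEx.mul (K / 10)).add h1).mono h2
    rwa [h3] at this
  have : K % 10 < 10 := Nat.mod_lt _ (by norm_num)
  by_cases h2 : K % 10 ≤ 2
  · exact key _ _ PEx.two (by omega) (by omega)
  by_cases h4 : K % 10 ≤ 4
  · exact key _ _ PEx.four (by omega) (by omega)
  by_cases h6 : K % 10 ≤ 6
  · exact key _ _ PEx.six (by omega) (by omega)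
  · exact key _ _ PEx.ten (by omega) (by omega)

section lower
variable {K n : ℕ} {A : Fin 5 → Fin K → Option (Fin n)}

/-- rows containing `t` -/
def rowsOf (A : Fin 5 → Fin K → Option (Fin n)) (t : Fin n) : Finset (Fin 5) :=
  Finset.univ.filter fun j => ∃ k, A j k = some t

theorem mem_rowsOf {t : Fin n} {j : Fin 5} : j ∈ rowsOf A t ↔ ∃ k, A j k = some t := by
  simp [rowsOf]

theorem col_two (hA : IsPDA 5 K 3 A) (k : Fin K) :
    (Finset.univ.filter fun j : Fin 5 => A j k ≠ none).card = 2 := by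
  have h := hA.1 k
  have h2 := Finset.card_filter_add_card_filter_not (s := (Finset.univ : Finset (Fin 5)))
    (fun j : Fin 5 => A j k = none)
  simp only [Finset.card_univ, Fintype.card_fin] at h2
  have h3 : (Finset.univ.filter fun j : Fin 5 => ¬ A j k = none).card = 2 := by
    have : (Finset.univ.filter fun j : Fin 5 => A j k = none).card = 3 := by convert h
    omega
  exact h3

theorem other_row (hA : IsPDA 5 K 3 A) {t : Fin n} {j : Fin 5} {k : Fin K}
    (h : A j k = some t) : ∃ x, x ≠ j ∧ A x k ≠ none ∧ x ∉ rowsOf A t := by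
  have h2 := col_two hA k
  have hj : j ∈ Finset.univ.filter fun j : Fin 5 => A j k ≠ none := by simp [h]
  obtain ⟨x, hx, hxj⟩ := Finset.exists_mem_ne (h2.symm ▸ one_lt_two : 1 < (Finset.univ.filter fun j : Fin 5 => A j k ≠ none).card) j
  refine ⟨x, hxj, by simpa using hx, ?_⟩
  rw [mem_rowsOf]
  rintro ⟨k', hk'⟩
  have hxk : A x k ≠ none := by simpa using hx
  by_cases hkk : k' = k
  · subst hkk
    exact hxj (hA.2.2.1 _ _ _ _ hk' h)
  · exact hxk (hA.2.2.2 x j k' k t hxj hkk hk' h).1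

theorem rowsOf_le (hA : IsPDA 5 K 3 A) (t : Fin n) : (rowsOf A t).card ≤ 4 := by
  by_contra hc
  have h5 : rowsOf A t = Finset.univ := by
    apply Finset.eq_univ_of_card
    have := Finset.card_le_univ (rowsOf A t)
    simp at this ⊢
    omega
  obtain ⟨k, hk⟩ := mem_rowsOf.1 (h5 ▸ Finset.mem_univ (0 : Fin 5))
  obtain ⟨x, _, _, hx⟩ := other_row hA hk
  rw [h5] at hx
  exact hx (Finset.mem_univ _)

/-- sums over cells regrouped by symbol -/
theorem regroup (f : Fin 5 → Fin K → ℤ) :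
    ∑ t : Fin n, ∑ j, ∑ k, (if A j k = some t then f j k else 0) =
      ∑ k, ∑ j, if A j k ≠ none then f j k else 0 := by
  rw [Finset.sum_comm]
  simp_rw [Finset.sum_comm (s := (Finset.univ : Finset (Fin n)))]
  rw [Finset.sum_comm]
  refine Finset.sum_congr rfl fun k _ => Finset.sum_congr rfl fun j _ => ?_
  cases h : A j k with
  | none => simp
  | some s => simp

theorem inner_mem (hA : IsPDA 5 K 3 A) {t : Fin n} (f : Fin 5 → Fin K → ℤ) {j : Fin 5} {k : Fin K}
    (h : A j k = some t) : (∑ k, if A j k = some t then f j k else 0) = f j k := by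
  rw [Finset.sum_eq_single k]
  · simp [h]
  · intro k' _ hk'
    rw [if_neg]
    intro h'
    exact hk' (hA.2.1 _ _ _ _ h' h)
  · simp

theorem inner_not_mem {t : Fin n} (f : Fin 5 → Fin K → ℤ) {j : Fin 5}
    (h : j ∉ rowsOf A t) : (∑ k, if A j k = some t then f j k else 0) = 0 := by
  refine Finset.sum_eq_zero fun k _ => ?_
  rw [if_neg]
  intro h'
  exact h (mem_rowsOf.2 ⟨k, h'⟩)

theorem sum_rows (hA : IsPDA 5 K 3 A) : ∑ t : Fin n, ((rowsOf A t).card : ℤ) = 2 * K := by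
  have h := regroup (A := A) (fun _ _ => 1)
  have h1 : ∀ k, (∑ j, if A j k ≠ none then (1 : ℤ) else 0) = 2 := by
    intro k
    rw [Finset.sum_boole]
    exact_mod_cast col_two hA k
  simp_rw [h1] at h
  have h2 : ∀ t, (∑ j, ∑ k, if A j k = some t then (1 : ℤ) else 0) = (rowsOf A t).card := by
    intro t
    rw [Finset.card_eq_sum_ones, Nat.cast_sum, ← Finset.sum_subset (Finset.subset_univ (rowsOf A t))]
    · refine Finset.sum_congr rfl fun j hj => ?_
      obtain ⟨k, hk⟩ := mem_rowsOf.1 hj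
      simpa using inner_mem hA (fun _ _ => 1) hk
    · intro j _ hj
      exact inner_not_mem (fun _ _ => 1) hj
  simp_rw [h2] at h
  rw [h]
  simp [mul_comm]

/-- weight of a cell relative to row `a` -/
noncomputable def wt (A : Fin 5 → Fin K → Option (Fin n)) (a j : Fin 5) (k : Fin K) : ℤ :=
  if j = a then 1 else if A a k ≠ none then -1 else 0

theorem wt_total (hA : IsPDA 5 K 3 A) (a : Fin 5) :
    ∑ t : Fin n, ∑ j, ∑ k, (if A j k = some t then wt A a j k else 0) = 0 := by
  rw [regroup]
  refine Finset.sum_eq_zero fun k _ => ?_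
  by_cases h : A a k = none
  · refine Finset.sum_eq_zero fun j _ => ?_
    by_cases hj : j = a
    · subst hj; simp [h]
    · simp [wt, hj, h]
  · have h2 := col_two hA k
    rw [← Finset.sum_filter]
    have ha : a ∈ Finset.univ.filter fun j : Fin 5 => A j k ≠ none := by simp [h]
    rw [← Finset.add_sum_erase _ _ ha]
    have : ∀ j ∈ (Finset.univ.filter fun j : Fin 5 => A j k ≠ none).erase a, wt A a j k = -1 := by
      intro j hj
      simp [wt, (Finset.mem_erase.1 hj).1, h]
    rw [Finset.sum_congr rfl this, Finset.sum_const, Finset.card_erase_of_mem ha, h2]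
    simp [wt]

theorem wt_mem (hA : IsPDA 5 K 3 A) (a : Fin 5) (t : Fin n) (h : a ∈ rowsOf A t) :
    ∑ j, ∑ k, (if A j k = some t then wt A a j k else 0) = 1 := by
  obtain ⟨k, hk⟩ := mem_rowsOf.1 h
  rw [Finset.sum_eq_single a]
  · rw [inner_mem hA _ hk]; simp [wt]
  · intro j _ hj
    refine Finset.sum_eq_zero fun l _ => ?_
    split_ifs with hl
    · have hkl : k ≠ l := by
        rintro rfl
        exact hj (hA.2.2.1 _ _ _ _ hl hk)
      have := (hA.2.2.2 a j k l t (Ne.symm hj) hkl hk hl).1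
      simp [wt, hj, this]
    · rfl
  · simp

theorem wt_four (hA : IsPDA 5 K 3 A) (a : Fin 5) (t : Fin n) (h : a ∉ rowsOf A t)
    (h4 : (rowsOf A t).card = 4) :
    ∑ j, ∑ k, (if A j k = some t then wt A a j k else 0) = -4 := by
  have hJ : rowsOf A t = Finset.univ.erase a := by
    apply Finset.eq_of_subset_of_card_le
    · intro j hj
      refine Finset.mem_erase.2 ⟨?_, Finset.mem_univ _⟩
      rintro rfl; exact h hj
    · rw [h4, Finset.card_erase_of_mem (Finset.mem_univ _)]; simp
  rw [← Finset.sum_subset (Finset.subset_univ (rowsOf A t))]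
  · have : ∀ j ∈ rowsOf A t, (∑ k, if A j k = some t then wt A a j k else 0) = -1 := by
      intro j hj
      obtain ⟨k, hk⟩ := mem_rowsOf.1 hj
      rw [inner_mem hA _ hk]
      obtain ⟨x, _, hx, hxt⟩ := other_row hA hk
      have hxa : x = a := by
        by_contra hne
        exact hxt (hJ ▸ Finset.mem_erase.2 ⟨hne, Finset.mem_univ _⟩)
      subst hxa
      have : j ≠ x := by rintro rfl; exact h hj
      simp [wt, this, hx]
    rw [Finset.sum_congr rfl this, Finset.sum_const, h4]; simp
  · intro j _ hj
    exact inner_not_mem _ hj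

theorem lower_le (hA : IsPDA 5 K 3 A) : K ≤ 2 * n := by
  have h := sum_rows hA
  have h2 : ∑ t : Fin n, ((rowsOf A t).card : ℤ) ≤ ∑ t : Fin n, 4 :=
    Finset.sum_le_sum fun t _ => by exact_mod_cast rowsOf_le hA t
  simp at h2
  omega

theorem lower_dvd (hA : IsPDA 5 K 3 A) (hn : 2 * n ≤ K + 1) : 5 ∣ n := by
  have hs := sum_rows hA
  -- a good row
  have hgood : ∃ a : Fin 5, ∀ t, (rowsOf A t).card = 4 ∨ a ∈ rowsOf A t := by
    by_contra hc
    push Not at hc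
    have h1 : (Finset.univ : Finset (Fin 5)) ⊆ Finset.univ.biUnion
        (fun t : Fin n => if (rowsOf A t).card = 4 then ∅ else (rowsOf A t)ᶜ) := by
      intro a _
      obtain ⟨t, ht, hat⟩ := hc a
      refine Finset.mem_biUnion.2 ⟨t, Finset.mem_univ _, ?_⟩
      simp [ht, hat]
    have h2 := (Finset.card_le_card h1).trans Finset.card_biUnion_le
    have h3 : ∀ t : Fin n, (((if (rowsOf A t).card = 4 then (∅ : Finset (Fin 5))
        else (rowsOf A t)ᶜ).card : ℕ) : ℤ) ≤ 2 * (4 - ((rowsOf A t).card : ℤ)) := by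
      intro t
      have := rowsOf_le hA t
      split_ifs with h
      · simp [h]
      · rw [Finset.card_compl, Fintype.card_fin]
        omega
    have h4 := Finset.sum_le_sum fun t (_ : t ∈ (Finset.univ : Finset (Fin n))) => h3 t
    rw [← Finset.mul_sum, Finset.sum_sub_distrib, hs] at h4
    have h5 : (5 : ℤ) ≤ ∑ t : Fin n, (((if (rowsOf A t).card = 4 then (∅ : Finset (Fin 5))
        else (rowsOf A t)ᶜ).card : ℕ) : ℤ) := by
      exact_mod_cast h2
    simp only [Finset.sum_const, Finset.card_univ, Fintype.card_fin, nsmul_eq_mul] at h4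
    omega
  obtain ⟨a, ha⟩ := hgood
  have h0 := wt_total hA a
  have h1 : (5 : ℤ) ∣ ∑ t : Fin n,
      (1 - ∑ j, ∑ k, (if A j k = some t then wt A a j k else 0)) := by
    refine Finset.dvd_sum fun t _ => ?_
    by_cases hm : a ∈ rowsOf A t
    · rw [wt_mem hA a t hm]; norm_num
    · rw [wt_four hA a t hm ((ha t).resolve_right hm)]; norm_num
  rw [Finset.sum_sub_distrib, h0] at h1
  simp at h1
  exact_mod_cast h1

end lower

theorem ceil_half (K : ℕ) : ⌈(K : ℚ) / 2⌉₊ = (K + 1) / 2 := by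
  apply le_antisymm
  · rw [Nat.ceil_le]
    have : K ≤ 2 * ((K + 1) / 2) := by omega
    have : (K : ℚ) ≤ 2 * (((K + 1) / 2 : ℕ) : ℚ) := by exact_mod_cast this
    linarith
  · have h := Nat.le_ceil ((K : ℚ) / 2)
    have : (K : ℚ) ≤ ((2 * ⌈(K : ℚ) / 2⌉₊ : ℕ) : ℚ) := by push_cast; linarith
    have : K ≤ 2 * ⌈(K : ℚ) / 2⌉₊ := by exact_mod_cast this
    omega

theorem stmt_17 (K : ℕ) (hK : 0 < K) :
    sPDA 5 K 3 =
      if K % 10 = 0 ∨ K % 10 = 9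
        then ⌈(K : ℚ) / 2⌉₊
        else ⌈(K : ℚ) / 2⌉₊ + 1 := by
  rw [ceil_half]
  split_ifs with h
  · apply le_antisymm
    · exact Nat.sInf_le (PEx.upper0 K h)
    · refine le_csInf ⟨_, PEx.upper0 K h⟩ ?_
      rintro n ⟨A, hA⟩
      have := lower_le hA
      omega
  · apply le_antisymm
    · exact Nat.sInf_le (PEx.upper1 K h)
    · refine le_csInf ⟨_, PEx.upper1 K h⟩ ?_
      rintro n ⟨A, hA⟩
      have := lower_le hA
      by_contra hc
      have := lower_dvd hA (by omega)
      omega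
end
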